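/- Let G be a finite group of odd order and let p be an odd prime with p ≠ 7. If the average of the degrees of the irreducible complex characters of G whose degrees are not divisible by p is strictly less than 2, then G has a normal p-complement. -/

import Mathlib

open scoped BigOperators

/-- The set of irreducible complex characters of `G`, viewed as functions `G → ℂ`. -/
def Irr (G : Type) [Monoid G] : Set (G → ℂ) :=
  {f | ∃ V : FDRep ℂ G, CategoryTheory.Simple V ∧ f = V.character}

/-- The degree of a character, i.e. its value at the identity (a natural number). -/
noncomputable def charDeg {G : Type} [One G] (f : G → ℂ) : ℕ := ⌊(f 1).re⌋₊

/-- The average of the degrees of the characters in a set `S` of characters. -/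
noncomputable def acd {G : Type} [One G] (S : Set (G → ℂ)) : ℝ :=
  (∑ᶠ f ∈ S, (f 1).re) / (S.ncard : ℝ)

/-- `G` has a normal `p`-complement: a normal subgroup of order coprime to `p`
whose index is a power of `p`. -/
def HasNormalPComplement (p : ℕ) (G : Type) [Group G] : Prop :=
  ∃ N : Subgroup G, N.Normal ∧ Nat.Coprime (Nat.card N) p ∧ ∃ n : ℕ, N.index = p ^ n


/-- Transfer evaluated at an element of `H` on whose conjugates `ϕ` is constant. -/
theorem aux_transfer_pow {G : Type*} [Group G] {H : Subgroup G} {A : Type*} [CommGroup A]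
    (ϕ : H →* A) [H.FiniteIndex] (g : G) (hg : g ∈ H)
    (key : ∀ (k : ℕ) (g₀ : G) (h : g₀⁻¹ * g ^ k * g₀ ∈ H),
      ϕ ⟨g₀⁻¹ * g ^ k * g₀, h⟩ = ϕ ⟨g, hg⟩ ^ k) :
    MonoidHom.transfer ϕ g = ϕ ⟨g, hg⟩ ^ H.index := by
  classical
  let := H.fintypeQuotientOfFiniteIndex
  rw [MonoidHom.transfer_eq_prod_quotient_orbitRel_zpowers_quot]
  rw [Finset.prod_congr rfl (fun q _ => key _ _ _), Finset.prod_pow_eq_pow_sum,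
    Subgroup.index_eq_sum_minimalPeriod H g]

theorem aux_pow_eq_one {A : Type*} [Group A] (z : A) (m n : ℕ) (hmn : Nat.Coprime m n)
    (h1 : z ^ m = 1) (h2 : z ^ n = 1) : z = 1 := by
  have h := Nat.dvd_gcd (orderOf_dvd_of_pow_eq_one h1) (orderOf_dvd_of_pow_eq_one h2)
  rw [hmn] at h
  exact orderOf_eq_one_iff.mp (Nat.dvd_one.mp h)

/-- An invariant linear character of a normal subgroup of coprime index extends. -/
theorem aux_extend {B : Type*} [Group B] [Finite B] (P : Subgroup B) {A : Type*} [CommGroup A]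
    (μ : P →* A) (hcop : Nat.Coprime (Nat.card P) P.index)
    (hinv : ∀ (b x : B) (hx : x ∈ P) (h : b⁻¹ * x * b ∈ P), μ ⟨b⁻¹ * x * b, h⟩ = μ ⟨x, hx⟩) :
    ∃ ν : B →* A, ∀ x : P, ν x = μ x := by
  have h1 : ∀ x : P, MonoidHom.transfer μ (x : B) = μ x ^ P.index := by
    intro x
    refine aux_transfer_pow μ x x.2 ?_
    intro k g₀ h
    rw [hinv g₀ _ (P.pow_mem x.2 k) h, ← map_pow]
    rfl
  by_cases h0 : Nat.card P = 1
  · refine ⟨1, fun x => ?_⟩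
    have : Subsingleton P := (Nat.card_eq_one_iff_unique.mp h0).1
    rw [Subsingleton.elim x 1]; simp
  obtain ⟨m, hm⟩ := Nat.exists_mul_mod_eq_one_of_coprime hcop.symm
    (lt_of_le_of_ne (Nat.card_pos) (Ne.symm h0))
  refine ⟨(MonoidHom.transfer μ) ^ m, fun x => ?_⟩
  have hc : μ x ^ Nat.card P = 1 := by rw [← map_pow, pow_card_eq_one', map_one]
  rw [MonoidHom.pow_apply, h1, ← pow_mul, pow_eq_pow_mod _ hc, hm.2, pow_one]

open scoped commutatorElement IsMulCommutative in
theorem aux_tate_step {G : Type} [Group G] [Finite G] {p : ℕ} [Fact p.Prime] (P : Sylow p G)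
    (K : Subgroup G) [K.Normal] (hK : ∃ n : ℕ, K.index = p ^ n)
    (hmin : ∀ R : Subgroup G, R.Normal → (∃ n : ℕ, R.index = p ^ n) → K ≤ R)
    (hcomm : K.subgroupOf (P : Subgroup G) ≤ commutator (P : Subgroup G)) :
    K.subgroupOf (P : Subgroup G) ≤ ⁅K.subgroupOf (P : Subgroup G), ⊤⁆ := by
  classical
  set P0 : Subgroup (P : Subgroup G) := K.subgroupOf (P : Subgroup G) with hP0
  set D : Subgroup (P : Subgroup G) := ⁅P0, ⊤⁆ with hD
  have hDn : D.Normal := Subgroup.commutator_normal _ _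
  have hDP0 : D ≤ P0 := Subgroup.commutator_le_left _ _
  let Q := (P : Subgroup G) ⧸ D
  let q : (P : Subgroup G) →* Q := QuotientGroup.mk' D
  let π : Q →* G ⧸ K := QuotientGroup.lift D ((QuotientGroup.mk' K).comp (P : Subgroup G).subtype)
    (by
      intro x hx
      have := hDP0 hx
      rw [hP0, Subgroup.mem_subgroupOf] at this
      simpa using this)
  have hπq : ∀ x, π (q x) = (QuotientGroup.mk' K) (x : G) := fun x => rfl
  have hcent : ∀ x ∈ P0, ∀ y, q x * y = y * q x := by
    intro x hx y
    obtain ⟨y, rfl⟩ := QuotientGroup.mk'_surjective D y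
    change q x * q y = q y * q x
    rw [← map_mul, ← map_mul]
    apply QuotientGroup.eq.mpr
    have := Subgroup.commutator_mem_commutator (H₁ := P0) (H₂ := ⊤) (P0.inv_mem hx)
      (Subgroup.mem_top (y⁻¹))
    have h2 := hDn.conj_mem _ (D.inv_mem this) (1)
    have h3 : (x * y)⁻¹ * (y * x) = ⁅y⁻¹, x⁻¹⁆ := by
      simp [commutatorElement_def]
      group
    rw [h3, ← commutatorElement_inv]
    exact D.inv_mem this
  have hker : ∀ y, π y = 1 → y ∈ Subgroup.center Q := by
    intro y hy
    obtain ⟨x, rfl⟩ := QuotientGroup.mk'_surjective D y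
    have hx : x ∈ P0 := by
      rw [hP0, Subgroup.mem_subgroupOf]
      have := hπq x
      rw [show π (q x) = 1 from hy] at this
      simpa using this.symm
    rw [Subgroup.mem_center_iff]
    intro z
    exact (hcent x hx z).symm
  let Gh : Subgroup (G × Q) := MonoidHom.eqLocus ((QuotientGroup.mk' K).comp (MonoidHom.fst G Q))
    (π.comp (MonoidHom.snd G Q))
  have hGh : ∀ a : G × Q, a ∈ Gh ↔ (QuotientGroup.mk' K) a.1 = π a.2 := fun a => Iff.rfl
  have hPK : (P : Subgroup G) ⊔ K = ⊤ := by
    obtain ⟨n, hn⟩ := hK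
    have h1 : ((P : Subgroup G) ⊔ K).index ∣ (P : Subgroup G).index :=
      Subgroup.index_dvd_of_le le_sup_left
    have h2 : ((P : Subgroup G) ⊔ K).index ∣ p ^ n := hn ▸ Subgroup.index_dvd_of_le le_sup_right
    have h3 := ((Nat.Prime.coprime_iff_not_dvd Fact.out).mpr P.not_dvd_index).pow_left n
    have := Nat.dvd_gcd h2 h1
    rw [h3] at this
    exact Subgroup.index_eq_one.mp (Nat.dvd_one.mp this)
  have hπs : ∀ g : G, ∃ y : Q, (QuotientGroup.mk' K) g = π y := by
    intro g
    have : g ∈ (P : Subgroup G) ⊔ K := hPK ▸ Subgroup.mem_top g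
    obtain ⟨x, hx, k, hk, rfl⟩ := Subgroup.mem_sup_of_normal_right.mp this
    refine ⟨q ⟨x, hx⟩, ?_⟩
    rw [hπq, map_mul]
    have : (QuotientGroup.mk' K) k = 1 := by simpa using hk
    rw [this, mul_one]
  let f : Gh →* G := (MonoidHom.fst G Q).comp Gh.subtype
  have hfs : Function.Surjective f := by
    intro g
    obtain ⟨y, hy⟩ := hπs g
    exact ⟨⟨(g, y), hy⟩, rfl⟩
  let Ph : Subgroup Gh := (P : Subgroup G).comap f
  have hind : Ph.index = (P : Subgroup G).index := Subgroup.index_comap_of_surjective _ hfs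
  let φ : Ph →* Subgroup.center Q :=
    { toFun := fun a => ⟨(q ⟨a.1.1.1, a.2⟩)⁻¹ * a.1.1.2, hker _ (by
          rw [map_mul, map_inv, hπq, ← (hGh _).mp a.1.2]
          simp)⟩
      map_one' := by
        apply Subtype.ext
        change (q 1)⁻¹ * 1 = 1
        simp
      map_mul' := by
        intro a b
        apply Subtype.ext
        change (q (⟨a.1.1.1, a.2⟩ * ⟨b.1.1.1, b.2⟩))⁻¹ * (a.1.1.2 * b.1.1.2)
          = ((q ⟨a.1.1.1, a.2⟩)⁻¹ * a.1.1.2) * ((q ⟨b.1.1.1, b.2⟩)⁻¹ * b.1.1.2)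
        have hz : (q ⟨a.1.1.1, a.2⟩)⁻¹ * a.1.1.2 ∈ Subgroup.center Q := hker _ (by
          rw [map_mul, map_inv, hπq, ← (hGh _).mp a.1.2]
          simp)
        have hz2 := Subgroup.mem_center_iff.mp hz (q ⟨b.1.1.1, b.2⟩)⁻¹
        rw [map_mul, mul_inv_rev, mul_assoc, ← mul_assoc _ a.1.1.2, ← mul_assoc, hz2]
        group }
  have hφ : ∀ a, ((φ a : Subgroup.center Q) : Q) = (q ⟨a.1.1.1, a.2⟩)⁻¹ * a.1.1.2 := fun a => rfl
  let V : Gh →* Subgroup.center Q := MonoidHom.transfer φ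
  have hQp : IsPGroup p Q := P.2.to_quotient D
  -- value on central kernel elements
  have hV1 : ∀ (x : (P : Subgroup G)) (hx : x ∈ P0) (h : ((1 : G), q x) ∈ Gh),
      ((V ⟨((1 : G), q x), h⟩ : Subgroup.center Q) : Q) = q x ^ (P : Subgroup G).index := by
    intro x hx h
    have hmem : (⟨((1 : G), q x), h⟩ : Gh) ∈ Ph := (P : Subgroup G).one_mem
    have h1 : ((φ ⟨⟨((1 : G), q x), h⟩, hmem⟩ : Subgroup.center Q) : Q) = q x := by
      rw [hφ]
      change (q 1)⁻¹ * q x = q x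
      simp
    rw [show V ⟨((1 : G), q x), h⟩ = φ ⟨⟨((1 : G), q x), h⟩, hmem⟩ ^ Ph.index from ?_]
    · rw [SubmonoidClass.coe_pow, h1, hind]
    · refine aux_transfer_pow φ _ hmem ?_
      intro k g₀ h'
      apply Subtype.ext
      rw [SubmonoidClass.coe_pow, h1, hφ]
      have e1 : (⟨((g₀⁻¹ * (⟨((1 : G), q x), h⟩ : Gh) ^ k * g₀ : Gh) : G × Q).1, h'⟩ :
          (P : Subgroup G)) = 1 := by
        apply Subtype.ext
        simp
      rw [e1]
      have e2 : ((g₀⁻¹ * (⟨((1 : G), q x), h⟩ : Gh) ^ k * g₀ : Gh) : G × Q).2 = q x ^ k := by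
        have := hcent (x ^ k) (P0.pow_mem hx k) (g₀ : G × Q).2
        rw [map_pow] at this
        simp [mul_assoc, this]
      rw [map_one, inv_one, one_mul, e2]
  have hmk : ∀ k : K, ((k : G), (1 : Q)) ∈ Gh := by
    intro k
    rw [hGh]
    simp
  let ψ : K →* Subgroup.center Q :=
    { toFun := fun k => V ⟨((k : G), 1), hmk k⟩
      map_one' := by
        rw [← map_one V]; rfl
      map_mul' := by
        intro a b
        rw [← map_mul V]
        congr 1
        apply Subtype.ext
        simp }
  have hV2 : ∀ k : K, ψ k = 1 := by
    let R : Subgroup G := ψ.ker.map K.subtype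
    have hRn : R.Normal := by
      constructor
      rintro _ ⟨k, hk, rfl⟩ g
      have hkn : g * k * g⁻¹ ∈ K := ‹K.Normal›.conj_mem _ k.2 g
      refine ⟨⟨g * k * g⁻¹, hkn⟩, ?_, rfl⟩
      obtain ⟨y, hy⟩ := hπs g
      let gh : Gh := ⟨(g, y), hy⟩
      have e : (⟨((⟨g * k * g⁻¹, hkn⟩ : K), 1), hmk _⟩ : Gh) = gh * ⟨((k : G), 1), hmk k⟩ * gh⁻¹ := by
        apply Subtype.ext
        simp [gh]
      change V _ = 1
      rw [e, map_mul, map_mul, map_inv, mul_comm, inv_mul_cancel_left]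
      exact hk
    have hRi : ∃ n, R.index = p ^ n := by
      obtain ⟨n, hn⟩ := hK
      have h1 : ψ.ker.index ∣ Nat.card (Subgroup.center Q) := by
        rw [Subgroup.index_ker]
        exact Subgroup.card_subgroup_dvd_card _
      obtain ⟨m, hm⟩ := IsPGroup.iff_card.mp (hQp.to_subgroup (Subgroup.center Q))
      rw [hm] at h1
      obtain ⟨j, -, hj⟩ := (Nat.dvd_prime_pow Fact.out).mp h1
      refine ⟨j + n, ?_⟩
      rw [pow_add, ← hj, ← hn]
      rw [Subgroup.index_map_subtype]
    intro k
    obtain ⟨k', hk', e⟩ := hmin R hRn hRi k.2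
    have : k' = k := Subtype.ext e
    rw [← this]
    exact hk'
  have hmW : ∀ x : (P : Subgroup G), ((x : G), q x) ∈ Gh := fun x => (hπq x).symm
  let W : (P : Subgroup G) →* Subgroup.center Q :=
    V.comp { toFun := fun x => ⟨((x : G), q x), hmW x⟩
             map_one' := by apply Subtype.ext; simp
             map_mul' := by intro a b; apply Subtype.ext; simp }
  intro x hx
  have hW : W x = 1 := Abelianization.commutator_subset_ker W (hcomm hx)
  have hx1 : ((1 : G), q x) ∈ Gh := by
    rw [hGh, hπq]
    have : (x : G) ∈ K := hx
    rw [map_one]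
    exact ((QuotientGroup.eq_one_iff (x : G)).mpr this).symm
  have hWx : W x = ψ ⟨x, hx⟩ * V ⟨((1 : G), q x), hx1⟩ := by
    change V _ = V _ * V _
    rw [← map_mul]
    congr 1
    apply Subtype.ext
    simp
  rw [hV2, one_mul, hW] at hWx
  have h5 := hV1 x hx hx1
  rw [← hWx] at h5
  obtain ⟨m, hm⟩ := hQp (q x)
  have h6 : q x = 1 := aux_pow_eq_one _ _ _
    (((Nat.Prime.coprime_iff_not_dvd Fact.out).mpr P.not_dvd_index).pow_left m) hm h5.symm
  exact (QuotientGroup.eq_one_iff x).mp h6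

theorem aux_exists_min {G : Type} [Group G] [Finite G] (p : ℕ) (hp : p.Prime) :
    ∃ K : Subgroup G, K.Normal ∧ (∃ n : ℕ, K.index = p ^ n) ∧
      ∀ R : Subgroup G, R.Normal → (∃ n : ℕ, R.index = p ^ n) → K ≤ R := by
  obtain ⟨K, ⟨hKn, hKi⟩, hmin⟩ := Set.exists_min_image
    {K : Subgroup G | K.Normal ∧ ∃ n : ℕ, K.index = p ^ n} (fun K => Nat.card K)
    (Set.toFinite _) ⟨⊤, inferInstance, 0, by simp⟩
  refine ⟨K, hKn, hKi, fun R hRn ⟨m, hm⟩ => ?_⟩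
  obtain ⟨n, hn⟩ := hKi
  have h1 : (K ⊓ R).index = R.relIndex K * K.index := by
    rw [← Subgroup.relIndex_mul_index (inf_le_left : K ⊓ R ≤ K), Subgroup.inf_relIndex_left]
  have h2 : R.relIndex K ∣ p ^ m := hm ▸ Subgroup.relIndex_dvd_index_of_normal R K
  obtain ⟨j, -, hj⟩ := (Nat.dvd_prime_pow hp).mp h2
  have h3 := hmin (K ⊓ R) ⟨inferInstance, j + n, by rw [h1, hj, hn, pow_add]⟩
  have h4 : K ⊓ R = K := Subgroup.eq_of_le_of_card_ge inf_le_left h3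
  rw [← h4]
  exact inf_le_right

/-- If every linear character of a Sylow subgroup extends then there is a normal complement. -/
theorem aux_tate {G : Type} [Group G] [Finite G] {p : ℕ} [Fact p.Prime] (P : Sylow p G)
    (hext : ∀ μ : (P : Subgroup G) →* ℂˣ, ∃ l : G →* ℂˣ, ∀ x : (P : Subgroup G), l x = μ x) :
    HasNormalPComplement p G := by
  obtain ⟨K, hKn, hKi, hmin⟩ := aux_exists_min (G := G) p Fact.out
  have hcop : Nat.Coprime p (P : Subgroup G).index :=
    (Nat.Prime.coprime_iff_not_dvd Fact.out).mpr P.not_dvd_index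
  have hcomm : K.subgroupOf (P : Subgroup G) ≤ commutator (P : Subgroup G) := by
    intro x hx
    by_contra hxc
    have hne : (Abelianization.of x) ≠ 1 := by
      intro h
      exact hxc ((QuotientGroup.eq_one_iff x).mp h)
    obtain ⟨φ, hφ⟩ := CommGroup.exists_apply_ne_one_of_hasEnoughRootsOfUnity
      (Abelianization (P : Subgroup G)) ℂ hne
    obtain ⟨l, hl⟩ := hext (φ.comp Abelianization.of)
    have hlx : l x ≠ 1 := by rw [hl]; exact hφ
    let l' := l ^ (P : Subgroup G).index
    obtain ⟨n, hn⟩ := IsPGroup.iff_card.mp P.2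
    have hl' : ∀ g, l' g ^ (p ^ n) = 1 := by
      intro g
      rw [MonoidHom.pow_apply, ← pow_mul, ← map_pow, ← hn, mul_comm, Subgroup.card_mul_index,
        pow_card_eq_one', map_one]
    have hR : ∃ n, l'.ker.index = p ^ n := by
      rw [Subgroup.index_ker]
      have hfin : Finite l'.range := (Set.finite_range l').to_subtype
      have : IsPGroup p l'.range := by
        rintro ⟨_, g, rfl⟩
        exact ⟨n, Subtype.ext (hl' g)⟩
      exact IsPGroup.iff_card.mp this
    have h1 : l' x = 1 := hmin l'.ker inferInstance hR hx
    obtain ⟨m, hm⟩ := P.2 x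
    refine hlx (aux_pow_eq_one _ _ _ (hcop.pow_left m) ?_ h1)
    rw [← map_pow]
    have : (x : G) ^ p ^ m = 1 := by
      have := congrArg Subtype.val hm
      simpa using this
    rw [this, map_one]
  have hstep := aux_tate_step P K hKi hmin hcomm
  have hbot : K.subgroupOf (P : Subgroup G) = ⊥ := by
    have hnil : Group.IsNilpotent (P : Subgroup G) := P.2.isNilpotent
    obtain ⟨n, hn⟩ := Subgroup.nilpotent_iff_lowerCentralSeries.mp hnil
    have : ∀ n, K.subgroupOf (P : Subgroup G) ≤ (⊤ : Subgroup (P : Subgroup G)).lowerCentralSeries n := by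
      intro n
      induction n with
      | zero => simp
      | succ k ih => exact hstep.trans (Subgroup.commutator_mono ih le_rfl)
    exact le_bot_iff.mp (hn ▸ this n)
  obtain ⟨n, hn⟩ := hKi
  refine ⟨K, hKn, ?_, n, hn⟩
  rw [Nat.coprime_comm, Nat.Prime.coprime_iff_not_dvd Fact.out]
  intro hdvd
  obtain ⟨k, hk⟩ := exists_prime_orderOf_dvd_card' p hdvd
  have hz : IsPGroup p (Subgroup.zpowers (k : G)) := by
    rw [IsPGroup.iff_card]
    exact ⟨1, by rw [Nat.card_zpowers, Subgroup.orderOf_coe, hk, pow_one]⟩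
  obtain ⟨P', hP'⟩ := hz.exists_le_sylow
  obtain ⟨g, hg⟩ := MulAction.exists_smul_eq G P' P
  have h1 : g * k * g⁻¹ ∈ (P : Subgroup G) := by
    rw [← hg]
    have := hP' (Subgroup.mem_zpowers (k : G))
    rw [Sylow.coe_subgroup_smul]
    exact Subgroup.smul_mem_pointwise_smul _ (MulAut.conj g) _ this
  have h2 : (⟨g * k * g⁻¹, h1⟩ : (P : Subgroup G)) ∈ K.subgroupOf (P : Subgroup G) :=
    hKn.conj_mem _ k.2 g
  rw [hbot, Subgroup.mem_bot] at h2
  have h3 : g * k * g⁻¹ = 1 := congrArg Subtype.val h2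
  have h4 : k = 1 := by
    apply Subtype.ext
    simpa using h3
  rw [h4, orderOf_one] at hk
  exact (Fact.out : p.Prime).one_lt.ne hk

/-- The simultaneous eigenspace of a linear character. -/
def eigSp {H V : Type*} [Group H] [AddCommGroup V] [Module ℂ V] (ρ : H →* (V →ₗ[ℂ] V))
    (η : H →* ℂˣ) : Submodule ℂ V where
  carrier := {v | ∀ x, ρ x v = (η x : ℂ) • v}
  add_mem' := by
    intro a b ha hb x
    rw [map_add, ha x, hb x, smul_add]
  zero_mem' := by intro x; simp
  smul_mem' := by
    intro c v hv x
    rw [map_smul, hv x, smul_comm]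

/-- The projection to the eigenspace of a linear character. -/
noncomputable def eigPr {H V : Type*} [Group H] [Fintype H] [AddCommGroup V] [Module ℂ V]
    (ρ : H →* (V →ₗ[ℂ] V)) (η : H →* ℂˣ) : V →ₗ[ℂ] V :=
  (Fintype.card H : ℂ)⁻¹ • ∑ x : H, ((η x⁻¹ : ℂˣ) : ℂ) • ρ x

/-- Multiplicity of a linear character in a class function. -/
noncomputable def mult {H : Type*} [Group H] [Fintype H] (η : H →* ℂˣ) (f : H → ℂ) : ℂ :=
  (Fintype.card H : ℂ)⁻¹ * ∑ x : H, ((η x⁻¹ : ℂˣ) : ℂ) * f x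

theorem eigPr_apply {H V : Type*} [Group H] [Fintype H] [AddCommGroup V] [Module ℂ V]
    (ρ : H →* (V →ₗ[ℂ] V)) (η : H →* ℂˣ) (v : V) :
    eigPr ρ η v = (Fintype.card H : ℂ)⁻¹ • ∑ x : H, ((η x⁻¹ : ℂˣ) : ℂ) • ρ x v := by
  simp [eigPr, LinearMap.sum_apply]

theorem eigPr_comm {H V : Type*} [Group H] [Fintype H] [AddCommGroup V] [Module ℂ V]
    (ρ : H →* (V →ₗ[ℂ] V)) (η : H →* ℂˣ) (y : H) (v : V) :
    eigPr ρ η (ρ y v) = (η y : ℂ) • eigPr ρ η v := by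
  rw [eigPr_apply, eigPr_apply, smul_comm (η y : ℂ), Finset.smul_sum (r := (η y : ℂ))]
  congr 1
  apply Fintype.sum_equiv (Equiv.mulRight y)
  intro x
  simp only [Equiv.coe_mulRight, map_mul, mul_inv_rev, Units.val_mul, Module.End.mul_apply]
  rw [smul_smul, ← mul_assoc, map_inv η y, Units.mul_inv, one_mul]

theorem eigPr_isProj {H V : Type*} [Group H] [Fintype H] [AddCommGroup V] [Module ℂ V]
    (ρ : H →* (V →ₗ[ℂ] V)) (η : H →* ℂˣ) : LinearMap.IsProj (eigSp ρ η) (eigPr ρ η) := by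
  constructor
  · intro v y
    rw [eigPr_apply, map_smul, map_sum, smul_comm (η y : ℂ), Finset.smul_sum (r := (η y : ℂ))]
    congr 1
    apply Fintype.sum_equiv (Equiv.mulLeft y)
    intro x
    simp only [Equiv.coe_mulLeft, map_mul, mul_inv_rev, Units.val_mul, Module.End.mul_apply,
      map_smul]
    rw [smul_smul, mul_comm (((η x⁻¹ : ℂˣ) : ℂ)), ← mul_assoc, map_inv η y, Units.mul_inv, one_mul]
  · intro v hv
    rw [eigPr_apply, Finset.sum_congr rfl (g := fun _ => v) (fun x _ => ?_)]
    · simp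
      rw [← Nat.cast_smul_eq_nsmul ℂ, smul_smul, inv_mul_cancel₀ (by simp), one_smul]
    · rw [hv x, smul_smul, map_inv η x, Units.inv_mul, one_smul]

theorem mult_eq {H V : Type*} [Group H] [Fintype H] [AddCommGroup V] [Module ℂ V]
    [FiniteDimensional ℂ V] (ρ : H →* (V →ₗ[ℂ] V)) (η : H →* ℂˣ) :
    mult η (fun x => LinearMap.trace ℂ V (ρ x)) = (Module.finrank ℂ (eigSp ρ η) : ℂ) := by
  rw [← (eigPr_isProj ρ η).trace, eigPr, map_smul, map_sum, mult, smul_eq_mul]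
  simp

theorem eigPr_ne {H V : Type*} [Group H] [Fintype H] [AddCommGroup V] [Module ℂ V]
    (ρ : H →* (V →ₗ[ℂ] V)) (η η' : H →* ℂˣ) (hne : η ≠ η') (v : V) (hv : v ∈ eigSp ρ η') :
    eigPr ρ η v = 0 := by
  obtain ⟨x, hx⟩ : ∃ x, η x ≠ η' x := by
    by_contra! h
    exact hne (MonoidHom.ext h)
  have h1 := eigPr_comm ρ η x v
  rw [hv x, map_smul] at h1
  by_contra h0
  exact hx (Units.ext (smul_left_injective ℂ h0 h1)).symm

theorem sum_eig_le {H V : Type*} [Group H] [Fintype H] [AddCommGroup V] [Module ℂ V]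
    [FiniteDimensional ℂ V] (ρ : H →* (V →ₗ[ℂ] V)) (Y : Finset (H →* ℂˣ)) (F : Submodule ℂ V)
    (hF : ∀ η ∈ Y, eigSp ρ η ≤ F) :
    ∑ η ∈ Y, Module.finrank ℂ (eigSp ρ η) ≤ Module.finrank ℂ F := by
  classical
  rw [← Finset.sum_coe_sort, ← Module.finrank_pi_fintype]
  let Φ : ((η : Y) → eigSp ρ η.1) →ₗ[ℂ] F :=
    ∑ η : Y, (Submodule.inclusion (hF η.1 η.2)).comp (LinearMap.proj η)
  refine LinearMap.finrank_le_finrank_of_injective (f := Φ) ?_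
  rw [← LinearMap.ker_eq_bot, LinearMap.ker_eq_bot']
  intro v hv
  have hv' : ∑ η : Y, ((v η : eigSp ρ η.1) : V) = 0 := by
    have := congrArg (Subtype.val) hv
    simpa [Φ, LinearMap.sum_apply] using this
  funext η
  have h1 := congrArg (eigPr ρ η.1) hv'
  rw [map_sum, map_zero, Finset.sum_eq_single η] at h1
  · rw [(eigPr_isProj ρ η.1).map_id _ (v η).2] at h1
    exact Subtype.ext h1
  · intro b _ hb
    exact eigPr_ne ρ _ _ (fun h => hb (Subtype.ext h.symm)) _ (v b).2
  · simp

/-- `f` is the trace function of a finite-dimensional representation. -/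
def IsCh {H : Type} [Group H] (f : H → ℂ) : Prop :=
  ∃ (V : Type) (_ : AddCommGroup V) (_ : Module ℂ V) (_ : FiniteDimensional ℂ V)
    (ρ : H →* (V →ₗ[ℂ] V)), f = fun x => LinearMap.trace ℂ V (ρ x)

theorem IsCh.comp {H H' : Type} [Group H] [Group H'] {f : H → ℂ} (hf : IsCh f) (j : H' →* H) :
    IsCh (fun x => f (j x)) := by
  obtain ⟨V, i1, i2, i3, ρ, rfl⟩ := hf
  exact ⟨V, i1, i2, i3, ρ.comp j, rfl⟩

/-- Natural number multiplicity. -/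
noncomputable def mm {H : Type} [Group H] [Fintype H] (η : H →* ℂˣ) (f : H → ℂ) : ℕ :=
  ⌊(mult η f).re⌋₊

theorem mm_of_finrank {H V : Type} [Group H] [Fintype H] [AddCommGroup V] [Module ℂ V]
    [FiniteDimensional ℂ V] (ρ : H →* (V →ₗ[ℂ] V)) (η : H →* ℂˣ) :
    mm η (fun x => LinearMap.trace ℂ V (ρ x)) = Module.finrank ℂ (eigSp ρ η) := by
  rw [mm, mult_eq]
  simp

theorem mm_sum_le {H H' : Type} [Group H] [Fintype H] [Group H'] [Fintype H'] (j : H' →* H)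
    {f : H → ℂ} (hf : IsCh f) (μ : H' →* ℂˣ) (Y : Finset (H →* ℂˣ))
    (hY : ∀ η ∈ Y, η.comp j = μ) :
    ∑ η ∈ Y, mm η f ≤ mm μ (fun x => f (j x)) := by
  obtain ⟨V, i1, i2, i3, ρ, rfl⟩ := hf
  rw [show (fun x => (fun x => LinearMap.trace ℂ V (ρ x)) (j x)) =
    fun x => LinearMap.trace ℂ V ((ρ.comp j) x) from rfl, mm_of_finrank]
  simp only [mm_of_finrank]
  refine sum_eig_le ρ Y _ ?_
  intro η hη v hv x
  rw [← hY η hη]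
  exact hv (j x)

theorem mm_sum_le_deg {H : Type} [Group H] [Fintype H] {f : H → ℂ} (hf : IsCh f)
    (Y : Finset (H →* ℂˣ)) : ∑ η ∈ Y, mm η f ≤ charDeg f := by
  obtain ⟨V, i1, i2, i3, ρ, rfl⟩ := hf
  have h1 : charDeg (fun x => LinearMap.trace ℂ V (ρ x)) = Module.finrank ℂ V := by
    simp [charDeg]
  rw [h1]
  simp only [mm_of_finrank]
  rw [← finrank_top ℂ V]
  exact sum_eig_le ρ Y ⊤ (fun _ _ => le_top)

theorem mm_twist {H : Type} [Group H] [Fintype H] (η l : H →* ℂˣ) (f : H → ℂ) :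
    mm (l * η) (fun x => (l x : ℂ) * f x) = mm η f := by
  simp only [mm, mult]
  congr 4
  funext x
  rw [MonoidHom.mul_apply, Units.val_mul, map_inv l]
  have : (l x : ℂ) * ((l x)⁻¹ : ℂˣ) = 1 := Units.mul_inv _
  linear_combination (((η x⁻¹ : ℂˣ) : ℂ) * f x) * this

theorem mm_inv {H : Type} [Group H] [Fintype H] (η : H →* ℂˣ) (f : H → ℂ) :
    mm η⁻¹ (fun x => f x⁻¹) = mm η f := by
  simp only [mm, mult]
  congr 3
  refine Fintype.sum_equiv (Equiv.inv H) _ _ (fun x => ?_)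
  simp

theorem mm_conj {H : Type} [Group H] [Fintype H] (c : H ≃* H) (η : H →* ℂˣ) (f : H → ℂ)
    (hf : ∀ x, f (c x) = f x) :
    mm (η.comp c.toMonoidHom) f = mm η f := by
  simp only [mm, mult]
  congr 3
  refine Fintype.sum_equiv c.toEquiv _ _ (fun x => ?_)
  simp [hf]

theorem irr_iff {G : Type} [Group G] [Fintype G] (f : G → ℂ) :
    f ∈ Irr G ↔ IsCh f ∧ ∑ g, f g * f g⁻¹ = (Nat.card G : ℂ) := by
  constructor
  · rintro ⟨V, hV, rfl⟩
    exact ⟨⟨V, inferInstance, inferInstance, inferInstance, V.ρ, rfl⟩,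
      (FDRep.simple_iff_char_is_norm_one V).mp hV⟩
  · rintro ⟨⟨V, i1, i2, i3, ρ, rfl⟩, h⟩
    have e : (FDRep.of (R := ℂ) ρ).character = fun x => LinearMap.trace ℂ V (ρ x) := rfl
    exact ⟨FDRep.of (R := ℂ) ρ, (FDRep.simple_iff_char_is_norm_one _).mpr (by rw [e]; exact h), e.symm⟩

theorem irr_orth {G : Type} [Group G] [Fintype G] {f f' : G → ℂ} (hf : f ∈ Irr G)
    (hf' : f' ∈ Irr G) (hne : f ≠ f') : ∑ g, f g * f' g⁻¹ = 0 := by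
  obtain ⟨V, hV, rfl⟩ := hf
  obtain ⟨W, hW, rfl⟩ := hf'
  have hc : (Nat.card G : ℂ) ≠ 0 := Nat.cast_ne_zero.mpr Nat.card_pos.ne'
  have : Invertible (Nat.card G : ℂ) := invertibleOfNonzero hc
  have h := FDRep.char_orthonormal V W
  rw [if_neg] at h
  · exact (mul_eq_zero.mp h).resolve_left (inv_ne_zero hc)
  · rintro ⟨i⟩
    exact hne (FDRep.char_iso i)

theorem IsCh.twist {H : Type} [Group H] {f : H → ℂ} (hf : IsCh f) (l : H →* ℂˣ) :
    IsCh (fun x => (l x : ℂ) * f x) := by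
  obtain ⟨V, i1, i2, i3, ρ, rfl⟩ := hf
  refine ⟨V, i1, i2, i3, ⟨⟨fun x => (l x : ℂ) • ρ x, by simp⟩, ?_⟩, ?_⟩
  · intro x y
    simp only [map_mul, Units.val_mul]
    rw [smul_mul_smul_comm]
  · funext x
    simp

theorem IsCh.inv {H : Type} [Group H] {f : H → ℂ} (hf : IsCh f) :
    IsCh (fun x => f x⁻¹) := by
  obtain ⟨V, i1, i2, i3, ρ, rfl⟩ := hf
  refine ⟨Module.Dual ℂ V, inferInstance, inferInstance, inferInstance,
    Representation.dual ρ, ?_⟩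
  funext x
  exact (LinearMap.trace_transpose' (ρ x⁻¹)).symm

theorem IsCh.mul {H : Type} [Group H] {f f' : H → ℂ} (hf : IsCh f) (hf' : IsCh f') :
    IsCh (fun x => f x * f' x) := by
  obtain ⟨V, i1, i2, i3, ρ, rfl⟩ := hf
  obtain ⟨W, j1, j2, j3, σ, rfl⟩ := hf'
  refine ⟨TensorProduct ℂ V W, inferInstance, inferInstance, inferInstance,
    Representation.tprod ρ σ, ?_⟩
  funext x
  exact (LinearMap.trace_tensorProduct' (ρ x) (σ x)).symm

theorem IsCh.one {H : Type} [Group H] : IsCh (fun _ : H => (1 : ℂ)) := by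
  refine ⟨ℂ, inferInstance, inferInstance, inferInstance, 1, ?_⟩
  funext x
  simp

theorem IsCh.conj {H : Type} [Group H] {f : H → ℂ} (hf : IsCh f) (g x : H) :
    f (g * x * g⁻¹) = f x := by
  obtain ⟨V, i1, i2, i3, ρ, rfl⟩ := hf
  simp only [map_mul]
  rw [LinearMap.trace_mul_comm, ← mul_assoc, ← map_mul, inv_mul_cancel, map_one, one_mul]

theorem IsCh.deg {H : Type} [Group H] {f : H → ℂ} (hf : IsCh f) : f 1 = (charDeg f : ℂ) := by
  obtain ⟨V, i1, i2, i3, ρ, rfl⟩ := hf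
  simp [charDeg]

theorem irr_twist {G : Type} [Group G] [Fintype G] {f : G → ℂ} (hf : f ∈ Irr G) (l : G →* ℂˣ) :
    (fun x => (l x : ℂ) * f x) ∈ Irr G := by
  rw [irr_iff] at hf ⊢
  refine ⟨hf.1.twist l, ?_⟩
  rw [← hf.2]
  refine Finset.sum_congr rfl (fun x _ => ?_)
  rw [map_inv]
  have : (l x : ℂ) * ((l x)⁻¹ : ℂˣ) = 1 := Units.mul_inv _
  linear_combination (f x * f x⁻¹) * this

theorem irr_inv {G : Type} [Group G] [Fintype G] {f : G → ℂ} (hf : f ∈ Irr G) :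
    (fun x => f x⁻¹) ∈ Irr G := by
  rw [irr_iff] at hf ⊢
  refine ⟨hf.1.inv, ?_⟩
  rw [← hf.2]
  refine Finset.sum_congr rfl (fun x _ => ?_)
  rw [inv_inv, mul_comm]

theorem irr_one {G : Type} [Group G] [Fintype G] : (fun _ => (1 : ℂ)) ∈ Irr G := by
  rw [irr_iff]
  exact ⟨IsCh.one, by simp⟩

theorem irr_linear {G : Type} [Group G] [Fintype G] (l : G →* ℂˣ) :
    (fun x => (l x : ℂ)) ∈ Irr G := by
  simpa using irr_twist irr_one l

theorem linear_of_deg_one {G : Type} [Group G] {f : G → ℂ} (hf : IsCh f) (h1 : charDeg f = 1) :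
    ∃ l : G →* ℂˣ, f = fun x => (l x : ℂ) := by
  obtain ⟨V, i1, i2, i3, ρ, rfl⟩ := hf
  have hd : Module.finrank ℂ V = 1 := by
    rw [← h1]
    simp [charDeg]
  have key : ∀ a : V →ₗ[ℂ] V, a = (LinearMap.trace ℂ V a) • LinearMap.id := by
    intro a
    obtain ⟨c, hc⟩ := (LinearMap.existsUnique_eq_smul_id_of_finrank_eq_one hd a).exists
    rw [hc]
    simp [hd]
  have hmul : ∀ a b : V →ₗ[ℂ] V, LinearMap.trace ℂ V (a * b)
      = LinearMap.trace ℂ V a * LinearMap.trace ℂ V b := by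
    intro a b
    conv_lhs => rw [key a]
    rw [smul_mul_assoc, map_smul, smul_eq_mul]
    rfl
  let L : G →* ℂ := ⟨⟨fun x => LinearMap.trace ℂ V (ρ x), by simp [hd]⟩, fun x y => by
    simp only [map_mul, hmul]⟩
  exact ⟨L.toHomUnits, rfl⟩

theorem exists_irr_sub {G : Type} [Group G] [Fintype G] (p : ℕ) : ∀ n : ℕ, ∀ (W : Type)
    [AddCommGroup W] [Module ℂ W] [FiniteDimensional ℂ W] (τ : Representation ℂ G W),
    Module.finrank ℂ W = n → ¬ p ∣ n →
    ∃ (V : Type) (_ : AddCommGroup V) (_ : Module ℂ V) (_ : FiniteDimensional ℂ V)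
      (σ : Representation ℂ G V) (j : V →ₗ[ℂ] W), σ.IsIrreducible ∧
      ¬ p ∣ Module.finrank ℂ V ∧ Function.Injective j ∧ ∀ g v, j (σ g v) = τ g (j v) := by
  intro n
  induction n using Nat.strong_induction_on with
  | _ n ih =>
    intro W _ _ _ τ hn hpn
    by_cases hirr : τ.IsIrreducible
    · exact ⟨W, inferInstance, inferInstance, inferInstance, τ, LinearMap.id, hirr, hn ▸ hpn,
        Function.injective_id, fun _ _ => rfl⟩
    have hss : τ.IsSemisimpleRepresentation := by
      rw [Representation.isSemisimpleRepresentation_iff_isSemisimpleModule_asModule]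
      infer_instance
    have hnt : Nontrivial (Subrepresentation τ) := by
      refine ⟨⊥, ⊤, ?_⟩
      intro h
      apply hpn
      have h' := congrArg Subrepresentation.toSubmodule h
      have : (⊥ : Submodule ℂ W) = ⊤ := h'
      have h0 : Module.finrank ℂ W = 0 := by
        rw [← finrank_top ℂ W, ← this, finrank_bot]
      rw [← hn, h0]
      exact dvd_zero p
    obtain ⟨U, hU0, hU1⟩ : ∃ U : Subrepresentation τ, U ≠ ⊥ ∧ U ≠ ⊤ := by
      by_contra! h
      exact hirr ⟨fun U => by
        by_cases h0 : U = ⊥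
        · exact Or.inl h0
        · exact Or.inr (h U h0)⟩
    obtain ⟨U', hUU'⟩ := hss.exists_isCompl U
    have hc : IsCompl U.toSubmodule U'.toSubmodule := by
      constructor
      · rw [disjoint_iff]
        have := congrArg Subrepresentation.toSubmodule hUU'.inf_eq_bot
        exact this
      · rw [codisjoint_iff]
        have := congrArg Subrepresentation.toSubmodule hUU'.sup_eq_top
        exact this
    have hsum := Submodule.finrank_add_eq_of_isCompl hc
    have hne : ∀ X : Subrepresentation τ, X ≠ ⊥ → 0 < Module.finrank ℂ X.toSubmodule := by
      intro X hX
      rw [Nat.pos_iff_ne_zero]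
      intro h
      apply hX
      apply Subrepresentation.toSubmodule_injective
      exact Submodule.finrank_eq_zero.mp h
    have hU'0 : U' ≠ ⊥ := by
      rintro rfl
      exact hU1 (by simpa using hUU'.sup_eq_top)
    have h1 := hne U hU0
    have h2 := hne U' hU'0
    have hstep : ∀ X : Subrepresentation τ, Module.finrank ℂ X.toSubmodule < n →
        ¬ p ∣ Module.finrank ℂ X.toSubmodule →
        ∃ (V : Type) (_ : AddCommGroup V) (_ : Module ℂ V) (_ : FiniteDimensional ℂ V)
          (σ : Representation ℂ G V) (j : V →ₗ[ℂ] W), σ.IsIrreducible ∧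
          ¬ p ∣ Module.finrank ℂ V ∧ Function.Injective j ∧ ∀ g v, j (σ g v) = τ g (j v) := by
      intro X hX hpX
      obtain ⟨V, i1, i2, i3, σ, j, h3, h4, h5, h6⟩ := ih _ hX X.toSubmodule X.toRepresentation rfl hpX
      refine ⟨V, i1, i2, i3, σ, X.toSubmodule.subtype.comp j, h3, h4,
        (Submodule.subtype_injective _).comp h5, ?_⟩
      intro g v
      rw [LinearMap.comp_apply, h6]
      rfl
    by_cases hpU : p ∣ Module.finrank ℂ U.toSubmodule
    · refine hstep U' (by omega) ?_
      intro hpU'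
      exact hpn (hn ▸ hsum ▸ dvd_add hpU hpU')
    · exact hstep U (by omega) hpU

theorem irr_of_irreducible {G V : Type} [Group G] [Fintype G] [AddCommGroup V] [Module ℂ V]
    [FiniteDimensional ℂ V] (σ : Representation ℂ G V) (h : σ.IsIrreducible) :
    (fun x => LinearMap.trace ℂ V (σ x)) ∈ Irr G := by
  rw [irr_iff]
  refine ⟨⟨V, inferInstance, inferInstance, inferInstance, σ, rfl⟩, ?_⟩
  have hc : (Nat.card G : ℂ) ≠ 0 := Nat.cast_ne_zero.mpr Nat.card_pos.ne'
  have : Invertible (Nat.card G : ℂ) := invertibleOfNonzero hc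
  have h1 := Representation.char_orthonormal σ σ
  rw [if_pos ⟨Representation.Equiv.refl σ⟩, inv_mul_eq_one₀ hc] at h1
  exact h1.symm

/-- Left translation on functions. -/
def leftTr {B G : Type} [Group B] [Group G] (i : B →* G) : B →* ((G → ℂ) →ₗ[ℂ] (G → ℂ)) where
  toFun b := LinearMap.funLeft ℂ ℂ (fun g => i b⁻¹ * g)
  map_one' := by
    ext v g
    simp
  map_mul' a b := by
    apply LinearMap.ext
    intro v
    funext g
    simp [LinearMap.funLeft_apply, mul_assoc]

/-- Right translation on functions. -/
def rightTr (G : Type) [Group G] : Representation ℂ G (G → ℂ) where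
  toFun b := LinearMap.funLeft ℂ ℂ (fun g => g * b)
  map_one' := by
    ext v g
    simp
  map_mul' a b := by
    apply LinearMap.ext
    intro v
    funext g
    simp [LinearMap.funLeft_apply, mul_assoc]

theorem trace_leftTr {B G : Type} [Group B] [Group G] [Fintype G] (i : B →* G)
    (hi : Function.Injective i) (b : B) [Decidable (b = 1)] :
    LinearMap.trace ℂ (G → ℂ) (leftTr i b) = if b = 1 then (Fintype.card G : ℂ) else 0 := by
  classical
  split_ifs with hb
  · subst hb
    simp
  · rw [LinearMap.trace_eq_matrix_trace ℂ (Pi.basisFun ℂ G), Matrix.trace]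
    refine Finset.sum_eq_zero (fun g _ => ?_)
    rw [Matrix.diag_apply, LinearMap.toMatrix_apply]
    have h1 : i b⁻¹ * g ≠ g := by
      intro h
      apply hb
      have h2 : i b⁻¹ = 1 := by simpa using h
      have h3 : b⁻¹ = 1 := hi (by rw [h2, map_one])
      simpa using h3
    simp only [Pi.basisFun_apply, Pi.basisFun_repr]
    change (Pi.single g (1 : ℂ) : G → ℂ) (i b⁻¹ * g) = 0
    rw [Pi.single_apply, if_neg h1]

theorem exists_irr_over {B G : Type} [Group B] [Fintype B] [Group G] [Fintype G] (p : ℕ)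
    (i : B →* G) (hi : Function.Injective i) (k : ℕ) (hk : Fintype.card G = k * Fintype.card B)
    (hpk : ¬ p ∣ k) (ν : B →* ℂˣ) :
    ∃ f ∈ Irr G, ¬ p ∣ charDeg f ∧ 1 ≤ mm ν (fun b => f (i b)) := by
  classical
  have hdim : Module.finrank ℂ (eigSp (leftTr i) ν⁻¹) = k := by
    have h := mult_eq (leftTr i) ν⁻¹
    simp only [trace_leftTr i hi, mult] at h
    have hB : (Fintype.card B : ℂ) ≠ 0 := Nat.cast_ne_zero.mpr Fintype.card_ne_zero
    rw [Finset.sum_eq_single (1 : B)] at h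
    · simp only [inv_one, map_one, Units.val_one, one_mul, if_true, hk] at h
      push_cast at h
      rw [mul_comm, mul_assoc, mul_inv_cancel₀ hB, mul_one] at h
      exact_mod_cast h.symm
    · intro b _ hb
      simp [hb]
    · simp
  let U : Subrepresentation (rightTr G) := ⟨eigSp (leftTr i) ν⁻¹, by
    intro g v hv b
    have h := hv b
    funext x
    exact congrFun h (x * g) |> fun h' => by
      simpa [leftTr, rightTr, LinearMap.funLeft_apply, mul_assoc] using h'⟩
  obtain ⟨V, i1, i2, i3, σ, j, h3, h4, h5, h6⟩ :=
    exists_irr_sub p k U.toSubmodule U.toRepresentation hdim hpk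
  refine ⟨_, irr_of_irreducible σ h3, ?_, ?_⟩
  · simpa [charDeg] using h4
  · rw [show (fun b => (fun x => LinearMap.trace ℂ V (σ x)) (i b)) =
      fun b => LinearMap.trace ℂ V ((σ.comp i) b) from rfl, mm_of_finrank, Nat.one_le_iff_ne_zero]
    intro h0
    have hbot : eigSp (σ.comp i) ν = ⊥ := Submodule.finrank_eq_zero.mp h0
    have hz : ∀ v, eigPr (σ.comp i) ν v = 0 := by
      intro v
      have := (eigPr_isProj (σ.comp i) ν).map_mem v
      rwa [hbot, Submodule.mem_bot] at this
    let ℓ : V →ₗ[ℂ] ℂ := (LinearMap.proj (1 : G)).comp (U.toSubmodule.subtype.comp j)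
    have hℓg : ∀ g v, ℓ (σ g v) = (j v : G → ℂ) g := by
      intro g v
      change (j (σ g v) : G → ℂ) 1 = _
      rw [h6]
      change (j v : G → ℂ) (1 * g) = _
      rw [one_mul]
    have hℓ : ∀ v, ℓ v = 0 := by
      intro v
      have hb : ∀ b, ℓ (σ (i b) v) = (ν b : ℂ) * ℓ v := by
        intro b
        rw [hℓg]
        have := congrFun ((j v).2 b⁻¹) 1
        simp only [leftTr, MonoidHom.coe_mk, OneHom.coe_mk, LinearMap.funLeft_apply, inv_inv,
          mul_one, Pi.smul_apply, smul_eq_mul, MonoidHom.inv_apply, map_inv] at this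
        exact this
      have h7 := congrArg ℓ (hz v)
      rw [eigPr_apply, map_smul, map_sum, map_zero] at h7
      rw [Finset.sum_congr rfl (g := fun _ => ℓ v)] at h7
      · simpa using h7
      · intro b _
        rw [map_smul, MonoidHom.comp_apply, hb, smul_eq_mul, ← mul_assoc, map_inv ν,
          Units.inv_mul, one_mul]
    have hj : ∀ v, j v = 0 := by
      intro v
      apply Subtype.ext
      funext g
      rw [← hℓg, hℓ]
      rfl
    have : Module.finrank ℂ V = 0 := by
      rw [Module.finrank_zero_iff]
      refine ⟨fun a b => h5 ?_⟩
      rw [hj, hj]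
    rw [this] at h4
    exact h4 (dvd_zero p)

theorem aux_two_by_two (A B : Matrix (Fin 2) (Fin 2) ℂ) (hAB : A * B = 1) :
    (A * A).trace * (B * B).trace = (A.trace * B.trace - 2) ^ 2 := by
  have h00 := congrFun (congrFun hAB 0) 0
  have h01 := congrFun (congrFun hAB 0) 1
  have h10 := congrFun (congrFun hAB 1) 0
  have h11 := congrFun (congrFun hAB 1) 1
  simp only [Matrix.mul_apply, Fin.sum_univ_two, Matrix.one_apply, Matrix.trace_fin_two,
    if_true, Fin.isValue, one_ne_zero, zero_ne_one, if_false] at *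
  generalize A 0 0 = a at *
  generalize A 0 1 = b at *
  generalize A 1 0 = c at *
  generalize A 1 1 = d at *
  generalize B 0 0 = e at *
  generalize B 0 1 = g at *
  generalize B 1 0 = h at *
  generalize B 1 1 = k at *
  have H1 : (a * d - b * c) * (e * k - g * h) = 1 := by
    linear_combination (c * g + d * k) * h00 + h11 - (c * e + d * h) * h01
  have H2 : (e + k) * (a * d - b * c) = a + d := by
    linear_combination d * h00 - b * h10 - c * h01 + a * h11
  have H3 : e + k = (a + d) * (e * k - g * h) := by
    linear_combination (e * k - g * h) * H2 - (e + k) * H1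
  have E1 : (a * a + b * c + (c * b + d * d)) = (a + d) ^ 2 - 2 * (a * d - b * c) := by ring
  have E2 : (e * e + g * h + (h * g + k * k)) = (e + k) ^ 2 - 2 * (e * k - g * h) := by ring
  rw [E1, E2]
  generalize a * d - b * c = δ at *
  generalize e * k - g * h = δ' at *
  linear_combination 4 * H1 - 2 * (e + k) * H2 + 2 * (a + d) * H3

theorem no_deg_two {G : Type} [Group G] [Fintype G] (hodd : Odd (Nat.card G)) {f : G → ℂ}
    (hf : f ∈ Irr G) : charDeg f ≠ 2 := by
  intro h2
  have hf' := (irr_iff f).mp hf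
  set n : G → ℂ := fun x => f x * f x⁻¹ with hn
  have hsq : ∀ x, n (x ^ 2) = (n x - 2) ^ 2 := by
    obtain ⟨V, i1, i2, i3, ρ, rfl⟩ := hf'.1
    have hd : Module.finrank ℂ V = 2 := by
      rw [← h2]
      simp [charDeg]
    let b := Module.finBasisOfFinrankEq ℂ V hd
    intro x
    have h1 := aux_two_by_two (LinearMap.toMatrix b b (ρ x)) (LinearMap.toMatrix b b (ρ x⁻¹))
      (by rw [← LinearMap.toMatrix_mul, ← map_mul, mul_inv_cancel, map_one, LinearMap.toMatrix_one])
    rw [← LinearMap.toMatrix_mul, ← LinearMap.toMatrix_mul] at h1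
    simp only [← LinearMap.trace_eq_matrix_trace, ← map_mul] at h1
    rw [hn]
    simp only [pow_two x, mul_inv_rev]
    exact h1
  have hs1 : ∑ x, n x = (Nat.card G : ℂ) := hf'.2
  have hs2 : ∑ x, n (x ^ 2) = (Nat.card G : ℂ) := by
    rw [← hs1]
    exact Fintype.sum_equiv (powCoprime (Nat.coprime_two_right.mpr hodd)) _ _ (fun x => rfl)
  have hs3 : ∑ x, n x * n x⁻¹ = (Nat.card G : ℂ) := by
    have e : ∀ x, n x * n x⁻¹ = n (x ^ 2) + 4 * n x - 4 := by
      intro x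
      have : n x⁻¹ = n x := by simp [hn, mul_comm]
      rw [this, hsq]
      ring
    simp only [e]
    rw [Finset.sum_sub_distrib, Finset.sum_add_distrib, hs2, ← Finset.mul_sum, hs1]
    simp
    ring
  have hnI : n ∈ Irr G := (irr_iff n).mpr ⟨hf'.1.mul hf'.1.inv, hs3⟩
  have hne : n ≠ fun _ => 1 := by
    intro h
    have h1 := congrFun h 1
    simp only [hn, inv_one] at h1
    rw [hf'.1.deg, h2] at h1
    norm_num at h1
  have h3 := irr_orth hnI irr_one hne
  simp only [mul_one] at h3
  rw [hs1] at h3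
  exact (Nat.cast_ne_zero.mpr Nat.card_pos.ne') h3

theorem irr_finite (G : Type) [Group G] [Fintype G] : (Irr G).Finite := by
  have hli : LinearIndependent ℂ (fun f : Irr G => (f : G → ℂ)) := by
    rw [linearIndependent_iff']
    intro s c hc f hf
    have h1 : ∑ g, (∑ f' ∈ s, c f' • (f' : G → ℂ)) g * (f : G → ℂ) g⁻¹ = 0 := by
      rw [hc]
      simp
    simp only [Finset.sum_apply, Pi.smul_apply, smul_eq_mul, Finset.sum_mul] at h1
    rw [Finset.sum_comm, Finset.sum_eq_single f] at h1
    · simp only [mul_assoc] at h1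
      rw [← Finset.mul_sum, ((irr_iff _).mp f.2).2] at h1
      exact (mul_eq_zero.mp h1).resolve_right (Nat.cast_ne_zero.mpr Nat.card_pos.ne')
    · intro f' _ hne
      simp only [mul_assoc]
      rw [← Finset.mul_sum, irr_orth f'.2 f.2 (fun h => hne (Subtype.ext h)), mul_zero]
    · exact fun h => absurd hf h
  exact Set.finite_coe_iff.mp hli.finite

/-- Twisting functions by linear characters. -/
instance twAct (G : Type) [Group G] : MulAction (G →* ℂˣ) (G → ℂ) where
  smul l f := fun x => (l x : ℂ) * f x
  one_smul f := by
    funext x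
    change ((1 : ℂˣ) : ℂ) * f x = f x
    simp
  mul_smul a b f := by
    funext x
    change (((a x * b x : ℂˣ)) : ℂ) * f x = a x * (b x * f x)
    simp [mul_assoc]

theorem tw_def {G : Type} [Group G] (l : G →* ℂˣ) (f : G → ℂ) :
    l • f = fun x => (l x : ℂ) * f x := rfl

theorem tw_deg {G : Type} [Group G] (l : G →* ℂˣ) (f : G → ℂ) : charDeg (l • f) = charDeg f := by
  simp [charDeg, tw_def]

theorem count_basic {G : Type} [Group G] [Fintype G] {p : ℕ} (hp : p.Prime)
    (h : acd {f ∈ Irr G | ¬ p ∣ charDeg f} < 2) (O : Set (G → ℂ))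
    (hO : ∀ f ∈ O, f ∈ Irr G ∧ ¬ p ∣ charDeg f ∧ 2 ≤ charDeg f) :
    ∃ hfin : O.Finite, ∑ f ∈ hfin.toFinset, (charDeg f - 2) < Nat.card (G →* ℂˣ) := by
  classical
  set S : Set (G → ℂ) := {f ∈ Irr G | ¬ p ∣ charDeg f} with hS
  have hSf : S.Finite := (irr_finite G).subset (fun f hf => hf.1)
  have hOS : O ⊆ S := fun f hf => ⟨(hO f hf).1, (hO f hf).2.1⟩
  have hOf : O.Finite := hSf.subset hOS
  refine ⟨hOf, ?_⟩
  have h1S : (fun _ => (1 : ℂ)) ∈ S := ⟨irr_one, by simpa [charDeg] using hp.one_lt.ne'⟩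
  have hpos : 0 < hSf.toFinset.card := Finset.card_pos.mpr ⟨_, hSf.mem_toFinset.mpr h1S⟩
  rw [acd, Set.ncard_eq_toFinset_card S hSf, div_lt_iff₀ (by exact_mod_cast hpos),
    finsum_mem_eq_finite_toFinset_sum _ hSf] at h
  have h2 : ∑ f ∈ hSf.toFinset, charDeg f < 2 * hSf.toFinset.card := by
    have : ∑ f ∈ hSf.toFinset, (f 1).re = ((∑ f ∈ hSf.toFinset, charDeg f : ℕ) : ℝ) := by
      push_cast
      refine Finset.sum_congr rfl (fun f hf => ?_)
      rw [((irr_iff f).mp (hSf.mem_toFinset.mp hf).1).1.deg]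
      simp
    rw [this] at h
    exact_mod_cast h
  set S1 := hSf.toFinset.filter (fun f => charDeg f = 1) with hS1
  set S2 := hSf.toFinset.filter (fun f => ¬ charDeg f = 1) with hS2
  have hge : ∀ f ∈ hSf.toFinset, 1 ≤ charDeg f := by
    intro f hf
    rw [Nat.one_le_iff_ne_zero]
    intro h0
    exact (hSf.mem_toFinset.mp hf).2 (h0 ▸ dvd_zero p)
  have hc1 : S1.card ≤ Nat.card (G →* ℂˣ) := by
    have : Fintype (G →* ℂˣ) := Fintype.ofFinite _
    rw [Nat.card_eq_fintype_card]
    refine (Finset.card_le_card (t := Finset.univ.image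
      (fun (l : G →* ℂˣ) => (fun x => (l x : ℂ)))) ?_).trans Finset.card_image_le
    intro f hf
    obtain ⟨hf1, hf2⟩ := Finset.mem_filter.mp hf
    obtain ⟨l, hl⟩ := linear_of_deg_one ((irr_iff f).mp (hSf.mem_toFinset.mp hf1).1).1 hf2
    exact Finset.mem_image.mpr ⟨l, Finset.mem_univ _, hl.symm⟩
  have hsub : hOf.toFinset ⊆ S2 := by
    intro f hf
    have := hOf.mem_toFinset.mp hf
    refine Finset.mem_filter.mpr ⟨hSf.mem_toFinset.mpr (hOS this), ?_⟩
    have := (hO f this).2.2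
    omega
  have hle : ∑ f ∈ hOf.toFinset, (charDeg f - 2) ≤ ∑ f ∈ S2, (charDeg f - 2) :=
    Finset.sum_le_sum_of_subset hsub
  have hcard := Finset.card_filter_add_card_filter_not (s := hSf.toFinset) (fun f => charDeg f = 1)
  have hsum := Finset.sum_filter_add_sum_filter_not hSf.toFinset (fun f => charDeg f = 1)
    (fun f => charDeg f)
  have e1 : ∑ f ∈ S1, charDeg f = S1.card := by
    rw [Finset.sum_congr rfl (g := fun _ => 1) (fun f hf => (Finset.mem_filter.mp hf).2)]
    rw [Finset.sum_const, smul_eq_mul, mul_one]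
  have e2 : ∑ f ∈ S2, charDeg f = ∑ f ∈ S2, (charDeg f - 2) + 2 * S2.card := by
    rw [mul_comm, ← smul_eq_mul, ← Finset.sum_const, ← Finset.sum_add_distrib]
    refine Finset.sum_congr rfl (fun f hf => ?_)
    obtain ⟨hf1, hf2⟩ := Finset.mem_filter.mp hf
    have := hge f hf1
    omega
  simp only [← hS1, ← hS2] at hcard hsum
  omega

/-- Orbit form of the counting lemma, for a finite family of inequivalent characters. -/
theorem count_orbits {G : Type} [Group G] [Fintype G] {p : ℕ} (hp : p.Prime)
    (h : acd {f ∈ Irr G | ¬ p ∣ charDeg f} < 2) (C : Finset (G → ℂ)) (d t : ℕ)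
    (hCne : C.Nonempty)
    (hC : ∀ f ∈ C, f ∈ Irr G ∧ ¬ p ∣ charDeg f ∧ 2 ≤ charDeg f)
    (hd : ∀ f ∈ C, charDeg f = d)
    (ht : ∀ f ∈ C, Nat.card (MulAction.stabilizer (G →* ℂˣ) f) = t)
    (hdis : ∀ f ∈ C, ∀ f' ∈ C, f ≠ f' → f' ∉ MulAction.orbit (G →* ℂˣ) f) :
    C.card * (d - 2) < t := by
  classical
  let O : Set (G → ℂ) := ⋃ f ∈ C, MulAction.orbit (G →* ℂˣ) f
  obtain ⟨hfin, hlt⟩ := count_basic hp h O (by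
    intro f hf
    obtain ⟨f0, hf0, l, rfl⟩ := Set.mem_iUnion₂.mp hf
    obtain ⟨h1, h2, h3⟩ := hC f0 hf0
    exact ⟨irr_twist h1 l, by rw [tw_deg]; exact h2, by rw [tw_deg]; exact h3⟩)
  have hof : ∀ f : G → ℂ, (MulAction.orbit (G →* ℂˣ) f).Finite := fun f => Set.finite_range _
  have hO : hfin.toFinset = C.biUnion (fun f => (hof f).toFinset) := by
    ext x
    simp [O]
  have hc : ∀ f ∈ C, (hof f).toFinset.card * t = Nat.card (G →* ℂˣ) := by
    intro f hf
    rw [← ht f hf, ← Set.ncard_eq_toFinset_card _ (hof f), ← MulAction.index_stabilizer,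
      Subgroup.index_mul_card]
  rw [hO, Finset.sum_biUnion] at hlt
  · have h5 : ∀ f ∈ C, (∑ x ∈ (hof f).toFinset, (charDeg x - 2)) * t
        = (d - 2) * Nat.card (G →* ℂˣ) := by
      intro f hf
      rw [Finset.sum_congr rfl (g := fun _ => d - 2), Finset.sum_const, smul_eq_mul]
      · rw [← hc f hf]
        ring
      · intro x hx
        obtain ⟨l, rfl⟩ := (hof f).mem_toFinset.mp hx
        change charDeg (l • f) - 2 = _
        rw [tw_deg, hd f hf]
    have htpos : 0 < t := by
      obtain ⟨f, hf⟩ := hCne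
      rw [← ht f hf]
      exact Nat.card_pos
    have h6 := Nat.mul_lt_mul_of_pos_right hlt htpos
    rw [Finset.sum_mul, Finset.sum_congr rfl h5, Finset.sum_const, smul_eq_mul, ← mul_assoc,
      mul_comm (Nat.card _) t] at h6
    exact Nat.lt_of_mul_lt_mul_right h6
  · intro f hf f' hf' hne
    rw [Function.onFun, Finset.disjoint_left]
    intro x hx hx'
    have h1 := (hof f).mem_toFinset.mp hx
    have h2 := (hof f').mem_toFinset.mp hx'
    apply hdis f hf f' hf' hne
    rw [← MulAction.orbit_eq_iff.mpr h1, MulAction.orbit_eq_iff.mpr h2]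
    exact MulAction.mem_orbit_self f'

section homs
variable {M : Type} [Group M] (a b c : M →* ℂˣ)

theorem hm_one_mul : 1 * a = a := one_mul a

theorem hm_inv_mul_cancel_left : a⁻¹ * (a * b) = b := inv_mul_cancel_left a b

theorem hm_mul_inv_cancel_left : a * (a⁻¹ * b) = b := mul_inv_cancel_left a b

theorem hm_inv_mul_cancel_right : a * b⁻¹ * b = a := inv_mul_cancel_right a b

theorem hm_mul_inv : (a * b)⁻¹ = a⁻¹ * b⁻¹ := mul_inv a b

theorem hm_inv_inv : (a⁻¹)⁻¹ = a := inv_inv a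

theorem hm_mul_assoc : a * b * c = a * (b * c) := mul_assoc a b c

theorem hm_inv_inj : a⁻¹ = b⁻¹ ↔ a = b := inv_inj (a := a) (b := b)

theorem hm_mul_right_inj : a * b = a * c ↔ b = c := mul_right_inj a

theorem hm_mul_eq_right : a * b = b ↔ a = 1 := mul_eq_right (a := a) (b := b)

end homs

/-- The normalizer of a subgroup. -/
abbrev Nn {G : Type} [Group G] (Q : Subgroup G) : Subgroup G := Subgroup.normalizer (Q : Set G)

theorem conj_apply {G : Type} [Group G] (Q : Subgroup G) (h : Nn Q) (x : Q) :
    ((Q.normalizerMonoidHom h x : Q) : G) = h * x * (h : G)⁻¹ := by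
  simp

/-- Action of linear characters and of the normalizer on linear characters of a subgroup. -/
instance lnAct {G : Type} [Group G] (Q : Subgroup G) :
    MulAction ((G →* ℂˣ) × Nn Q) (Q →* ℂˣ) where
  smul a μ := (a.1.comp Q.subtype) * μ.comp (Q.normalizerMonoidHom a.2⁻¹).toMonoidHom
  one_smul μ := by
    ext x
    change (((1 : G →* ℂˣ) (x : G)) * μ (Q.normalizerMonoidHom (1 : Nn Q)⁻¹ x) : ℂˣ) = ((μ x : ℂˣ) : ℂ)
    simp
  mul_smul a b μ := by
    ext x
    change (((a.1 * b.1 : G →* ℂˣ) (x : G)) * μ (Q.normalizerMonoidHom (a.2 * b.2)⁻¹ x) : ℂˣ)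
      = (((a.1 (x : G)) * (b.1 ((Q.normalizerMonoidHom a.2⁻¹ x : Q) : G) *
        μ (Q.normalizerMonoidHom b.2⁻¹ (Q.normalizerMonoidHom a.2⁻¹ x))) : ℂˣ) : ℂ)
    rw [conj_apply, map_mul b.1, map_mul b.1, map_inv b.1, mul_comm (b.1 _) (b.1 x),
      mul_inv_cancel_right, mul_inv_rev, map_mul Q.normalizerMonoidHom, MulAut.mul_apply,
      MonoidHom.mul_apply, mul_assoc]

theorem ln_apply {G : Type} [Group G] (Q : Subgroup G) (a : (G →* ℂˣ) × Nn Q) (μ : Q →* ℂˣ)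
    (x : Q) : (a • μ) x = a.1 x * μ (Q.normalizerMonoidHom a.2⁻¹ x) := rfl

/-- Restriction of linear characters. -/
def rs {G : Type} [Group G] (Q : Subgroup G) : (G →* ℂˣ) →* (Q →* ℂˣ) :=
  MonoidHom.compHom' Q.subtype

theorem rs_apply {G : Type} [Group G] (Q : Subgroup G) (l : G →* ℂˣ) (x : Q) :
    rs Q l x = l x := rfl

theorem ln_split {G : Type} [Group G] (Q : Subgroup G) (l : G →* ℂˣ) (h : Nn Q) (μ : Q →* ℂˣ) :
    ((l, h) : (G →* ℂˣ) × Nn Q) • μ = rs Q l * ((1, h) : (G →* ℂˣ) × Nn Q) • μ := by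
  ext x
  rw [MonoidHom.mul_apply, ln_apply, ln_apply, rs_apply]
  simp

theorem ln_one {G : Type} [Group G] (Q : Subgroup G) (l : G →* ℂˣ) (μ : Q →* ℂˣ) :
    ((l, 1) : (G →* ℂˣ) × Nn Q) • μ = rs Q l * μ := by
  rw [ln_split]
  exact congrArg (rs Q l * ·) (one_smul ((G →* ℂˣ) × Nn Q) μ)

theorem ln_mul {G : Type} [Group G] (Q : Subgroup G) (h : Nn Q) (μ ν : Q →* ℂˣ) :
    ((1, h) : (G →* ℂˣ) × Nn Q) • (μ * ν) =
      (((1, h) : (G →* ℂˣ) × Nn Q) • μ) * (((1, h) : (G →* ℂˣ) × Nn Q) • ν) := by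
  ext x
  simp only [MonoidHom.mul_apply, ln_apply]
  simp

theorem ln_inv {G : Type} [Group G] (Q : Subgroup G) (h : Nn Q) (μ : Q →* ℂˣ) :
    ((1, h) : (G →* ℂˣ) × Nn Q) • μ⁻¹ = (((1, h) : (G →* ℂˣ) × Nn Q) • μ)⁻¹ := by
  ext x
  simp only [MonoidHom.inv_apply, ln_apply]
  simp

theorem ln_rs {G : Type} [Group G] (Q : Subgroup G) (h : Nn Q) (l : G →* ℂˣ) :
    ((1, h) : (G →* ℂˣ) × Nn Q) • rs Q l = rs Q l := by
  ext x
  rw [ln_apply, rs_apply, rs_apply, conj_apply, map_mul, map_mul, map_inv, mul_comm (l _) (l x),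
      mul_inv_cancel_right]
  simp

theorem ln_mem {G : Type} [Group G] (Q : Subgroup G) (h : Nn Q) (hh : (h : G) ∈ Q) (μ : Q →* ℂˣ) :
    ((1, h) : (G →* ℂˣ) × Nn Q) • μ = μ := by
  ext x
  rw [ln_apply]
  have e : Q.normalizerMonoidHom h⁻¹ x = ⟨h, hh⟩⁻¹ * x * ⟨h, hh⟩ := by
    apply Subtype.ext
    rw [conj_apply]
    simp
  change ((((1 : G →* ℂˣ) (x : G)) * μ (Q.normalizerMonoidHom h⁻¹ x) : ℂˣ) : ℂ) = _
  rw [e, map_mul, map_mul, map_inv, mul_comm (μ ⟨h, hh⟩)⁻¹ (μ x), inv_mul_cancel_right]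
  simp

theorem pow_pair {G : Type} [Group G] (Q : Subgroup G) (l : G →* ℂˣ) (h : Nn Q) (m : ℕ) :
    ((l, h) : (G →* ℂˣ) × Nn Q) ^ m = (l ^ m, h ^ m) := rfl

theorem ln_pow {G : Type} [Group G] (Q : Subgroup G) (a : (G →* ℂˣ) × Nn Q) (μ : Q →* ℂˣ)
    (h : a • μ = μ) (m : ℕ) : (a ^ m) • μ = μ :=
  (MulAction.stabilizer ((G →* ℂˣ) × Nn Q) μ).pow_mem (x := a) h m

/-- Stabilizers split as a direct product. -/
theorem stab_split {G : Type} [Group G] [Finite G] {p : ℕ} [Fact p.Prime] (P : Sylow p G)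
    (l : G →* ℂˣ) (h : Nn (P : Subgroup G)) (μ : (P : Subgroup G) →* ℂˣ)
    (hs : ((l, h) : (G →* ℂˣ) × Nn (P : Subgroup G)) • μ = μ) :
    rs (P : Subgroup G) l = 1 ∧ ((1, h) : (G →* ℂˣ) × Nn (P : Subgroup G)) • μ = μ := by
  have h1 : rs (P : Subgroup G) l = 1 := by
    set m := ((P : Subgroup G).subgroupOf (Nn (P : Subgroup G))).index with hm
    have hmem : h ^ m ∈ (P : Subgroup G).subgroupOf (Nn (P : Subgroup G)) :=
      Subgroup.pow_index_mem _ h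
    have hcop : Nat.Coprime p m := by
      rw [Nat.Prime.coprime_iff_not_dvd Fact.out]
      intro hd
      exact P.not_dvd_index (hd.trans (Subgroup.relIndex_dvd_index_of_le Subgroup.le_normalizer))
    have h2 : (((l, h) : (G →* ℂˣ) × Nn (P : Subgroup G)) ^ m) • μ = μ :=
      ln_pow _ _ _ hs m
    rw [pow_pair, ln_split, ln_mem _ _ hmem, hm_mul_eq_right] at h2
    ext x
    obtain ⟨n, hn⟩ := P.2 x
    have h3 := DFunLike.congr_fun h2 x
    change (rs (P : Subgroup G) l x) ^ m = 1 at h3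
    have h4 : (rs (P : Subgroup G) l x) ^ p ^ n = 1 := by rw [← map_pow, hn, map_one]
    rw [aux_pow_eq_one _ _ _ (hcop.pow_left n) h4 h3]
    simp
  refine ⟨h1, ?_⟩
  rw [ln_split, h1, hm_one_mul] at hs
  exact hs

theorem odd_pow_trick {A : Type*} [Group A] (S : Subgroup A) (a : A) (n : ℕ) (hn : Odd n)
    (ha : a ^ n = 1) (h2 : a ^ 2 ∈ S) : a ∈ S := by
  obtain ⟨k, rfl⟩ := hn
  have : a = (a ^ 2) ^ (k + 1) := by
    rw [← pow_mul, show 2 * (k + 1) = (2 * k + 1) + 1 by ring, pow_succ, ha, one_mul]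
  rw [this]
  exact S.pow_mem h2 _

theorem inv_not_orbit {G : Type} [Group G] [Finite G] (hodd : Odd (Nat.card G))
    (Q : Subgroup G) (μ : Q →* ℂˣ) (hμ : μ ∉ (rs Q).range) :
    μ⁻¹ ∉ MulAction.orbit ((G →* ℂˣ) × Nn Q) μ := by
  rintro ⟨⟨l, h⟩, e⟩
  apply hμ
  change ((l, h) : (G →* ℂˣ) × Nn Q) • μ = μ⁻¹ at e
  rw [ln_split] at e
  have e1 : ((1, h) : (G →* ℂˣ) × Nn Q) • μ = (rs Q l)⁻¹ * μ⁻¹ := by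
    rw [← e, hm_inv_mul_cancel_left]
  have e2 : (((1, h) : (G →* ℂˣ) × Nn Q) ^ 2) • μ = μ := by
    rw [pow_two, mul_smul, e1, ln_mul, ln_inv, ln_inv, ln_rs, e1, hm_mul_inv, hm_inv_inv, hm_inv_inv,
      hm_inv_mul_cancel_left]
  have e3 : ((1, h) : (G →* ℂˣ) × Nn Q) ^ (Nat.card (Nn Q)) = 1 := by
    rw [pow_pair, pow_card_eq_one']
    exact congrArg (fun z => (z, (1 : Nn Q))) (one_pow (M := G →* ℂˣ) _)
  have hoddN : Odd (Nat.card (Nn Q)) := hodd.of_dvd_nat (Subgroup.card_subgroup_dvd_card _)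
  have e4 : ((1, h) : (G →* ℂˣ) × Nn Q) • μ = μ :=
    odd_pow_trick (MulAction.stabilizer ((G →* ℂˣ) × Nn Q) μ) (1, h) _ hoddN e3 e2
  rw [e4] at e1
  have e5 : μ ^ 2 ∈ (rs Q).range := by
    have : μ ^ 2 = rs Q l⁻¹ := by
      rw [pow_two]
      change μ * μ = (rs Q l)⁻¹
      nth_rewrite 1 [e1]
      rw [hm_inv_mul_cancel_right]
    rw [this]
    exact ⟨_, rfl⟩
  have hoddQ : Odd (Nat.card Q) := hodd.of_dvd_nat (Subgroup.card_subgroup_dvd_card _)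
  refine odd_pow_trick _ _ _ hoddQ ?_ e5
  ext x
  rw [MonoidHom.pow_apply, ← map_pow, pow_card_eq_one', map_one]
  rfl

/-- `B` is the stabilizer of `μ` in the normalizer. -/
def BStab {G : Type} [Group G] (Q : Subgroup G) (μ : Q →* ℂˣ) (B : Subgroup G) : Prop :=
  ∀ g, g ∈ B ↔ ∃ h : g ∈ Nn Q, ((1, ⟨g, h⟩) : (G →* ℂˣ) × Nn Q) • μ = μ

theorem BStab.exists {G : Type} [Group G] (Q : Subgroup G) (μ : Q →* ℂˣ) :
    ∃ B, BStab Q μ B := by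
  refine ⟨((MulAction.stabilizer ((G →* ℂˣ) × Nn Q) μ).comap (MonoidHom.inr _ _)).map
    (Nn Q).subtype, ?_⟩
  intro g
  constructor
  · rintro ⟨h, hh, rfl⟩
    exact ⟨h.2, hh⟩
  · rintro ⟨h, hh⟩
    exact ⟨⟨g, h⟩, hh, rfl⟩

theorem BStab.le {G : Type} [Group G] {Q : Subgroup G} {μ : Q →* ℂˣ} {B : Subgroup G}
    (hB : BStab Q μ B) : B ≤ Nn Q := fun g hg => ((hB g).mp hg).1

theorem BStab.ge {G : Type} [Group G] {Q : Subgroup G} {μ : Q →* ℂˣ} {B : Subgroup G}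
    (hB : BStab Q μ B) : Q ≤ B :=
  fun g hg => (hB g).mpr ⟨Subgroup.le_normalizer hg, ln_mem Q _ hg μ⟩

theorem BStab.inv {G : Type} [Group G] {Q : Subgroup G} {μ : Q →* ℂˣ} {B : Subgroup G}
    (hB : BStab Q μ B) : BStab Q μ⁻¹ B := by
  intro g
  rw [hB g]
  simp only [ln_inv, hm_inv_inj]

theorem BStab.twist {G : Type} [Group G] {Q : Subgroup G} {μ : Q →* ℂˣ} {B : Subgroup G}
    (hB : BStab Q μ B) (l : G →* ℂˣ) : BStab Q (rs Q l * μ) B := by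
  intro g
  rw [hB g]
  simp only [ln_mul, ln_rs, hm_mul_right_inj]

open Classical in
/-- `μ` is good for `f`. -/
def Good {G : Type} [Group G] [Fintype G] (Q : Subgroup G) (μ : Q →* ℂˣ) (f : G → ℂ) : Prop :=
  ∃ B : Subgroup G, BStab Q μ B ∧ ∃ ν : B →* ℂˣ,
    (∀ (x : G) (hx : x ∈ Q) (hB : x ∈ B), ν ⟨x, hB⟩ = μ ⟨x, hx⟩) ∧ 1 ≤ mm ν (fun b : B => f b)

theorem Good.inv {G : Type} [Group G] [Fintype G] {Q : Subgroup G} {μ : Q →* ℂˣ} {f : G → ℂ}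
    (h : Good Q μ f) : Good Q μ⁻¹ (fun x => f x⁻¹) := by
  classical
  obtain ⟨B, hB, ν, hν, hm⟩ := h
  refine ⟨B, hB.inv, ν⁻¹, ?_, ?_⟩
  · intro x hx hxB
    rw [MonoidHom.inv_apply, MonoidHom.inv_apply, hν x hx hxB]
  · rw [← mm_inv] at hm
    exact hm

theorem Good.twist {G : Type} [Group G] [Fintype G] {Q : Subgroup G} {μ : Q →* ℂˣ} {f : G → ℂ}
    (h : Good Q μ f) (l : G →* ℂˣ) : Good Q (rs Q l * μ) (l • f) := by
  classical
  obtain ⟨B, hB, ν, hν, hm⟩ := h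
  refine ⟨B, hB.twist l, rs B l * ν, ?_, ?_⟩
  · intro x hx hxB
    rw [MonoidHom.mul_apply, MonoidHom.mul_apply, hν x hx hxB]
    rfl
  · rw [← mm_twist ν (rs B l)] at hm
    exact hm

theorem good_exists {G : Type} [Group G] [Fintype G] {p : ℕ} [Fact p.Prime] (P : Sylow p G)
    (μ : (P : Subgroup G) →* ℂˣ) :
    ∃ f ∈ Irr G, ¬ p ∣ charDeg f ∧ Good (P : Subgroup G) μ f := by
  classical
  obtain ⟨B, hB⟩ := BStab.exists (P : Subgroup G) μ
  have hle := hB.ge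
  let e := Subgroup.subgroupOfEquivOfLe hle
  have hBi : ¬ p ∣ B.index := fun h => P.not_dvd_index (h.trans (Subgroup.index_dvd_of_le hle))
  obtain ⟨n, hn⟩ := IsPGroup.iff_card.mp P.2
  obtain ⟨ν, hν⟩ := aux_extend ((P : Subgroup G).subgroupOf B) (μ.comp e.toMonoidHom) (by
      rw [Nat.card_congr e.toEquiv, hn]
      apply Nat.Coprime.pow_left
      rw [Nat.Prime.coprime_iff_not_dvd Fact.out]
      intro hd
      exact P.not_dvd_index (hd.trans (Subgroup.relIndex_dvd_index_of_le hle))) (by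
      intro b x hx h
      obtain ⟨hbN, hb⟩ := (hB b).mp b.2
      have := DFunLike.congr_fun hb ⟨x, hx⟩
      rw [ln_apply] at this
      change μ _ = μ ⟨x, hx⟩
      rw [← this]
      simp only [MonoidHom.one_apply, one_mul]
      congr 1
      apply Subtype.ext
      rw [conj_apply]
      simp
      rfl)
  obtain ⟨f, hf, hpf, hm⟩ := exists_irr_over p B.subtype B.subtype_injective B.index (by
    rw [← Nat.card_eq_fintype_card, ← Nat.card_eq_fintype_card, Subgroup.index_mul_card]) hBi ν
  refine ⟨f, hf, hpf, B, hB, ν, ?_, hm⟩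
  intro x hx hxB
  exact hν ⟨⟨x, hxB⟩, hx⟩

theorem orb_card {G : Type} [Group G] [Finite G] {p : ℕ} [Fact p.Prime] (P : Sylow p G)
    (μ : (P : Subgroup G) →* ℂˣ) (B : Subgroup G) (hB : BStab (P : Subgroup G) μ B)
    (S : Subgroup (G →* ℂˣ)) :
    (MulAction.orbit (S.prod (⊤ : Subgroup (Nn (P : Subgroup G)))) μ).ncard *
      (Nat.card ((S ⊓ (rs (P : Subgroup G)).ker : Subgroup (G →* ℂˣ))) * Nat.card B) =
      Nat.card S * Nat.card (Nn (P : Subgroup G)) := by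
  rw [← MulAction.index_stabilizer]
  have h2 := Subgroup.card_mul_index
    (MulAction.stabilizer (S.prod (⊤ : Subgroup (Nn (P : Subgroup G)))) μ)
  have h3 : Nat.card (MulAction.stabilizer (S.prod (⊤ : Subgroup (Nn (P : Subgroup G)))) μ) =
      Nat.card ((S ⊓ (rs (P : Subgroup G)).ker : Subgroup (G →* ℂˣ))) * Nat.card B := by
    rw [← Nat.card_prod]
    have key : ∀ a : MulAction.stabilizer (S.prod (⊤ : Subgroup (Nn (P : Subgroup G)))) μ,
        rs (P : Subgroup G) a.1.1.1 = 1 ∧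
          ((1, a.1.1.2) : (G →* ℂˣ) × Nn (P : Subgroup G)) • μ = μ :=
      fun a => stab_split P a.1.1.1 a.1.1.2 μ a.2
    refine Nat.card_congr
      { toFun := fun a => (⟨a.1.1.1, a.1.2.1, (key a).1⟩,
          ⟨(a.1.1.2 : G), (hB _).mpr ⟨a.1.1.2.2, (key a).2⟩⟩)
        invFun := fun b => ⟨⟨(b.1.1, ⟨b.2.1, hB.le b.2.2⟩), b.1.2.1, trivial⟩, ?_⟩
        left_inv := fun a => rfl
        right_inv := fun b => rfl }
    obtain ⟨hb, hb'⟩ := (hB b.2.1).mp b.2.2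
    change ((b.1.1, ⟨b.2.1, hB.le b.2.2⟩) : (G →* ℂˣ) × Nn (P : Subgroup G)) • μ = μ
    rw [ln_split, hb']
    have : rs (P : Subgroup G) b.1.1 = 1 := b.1.2.2
    rw [this, hm_one_mul]
  have h4 : Nat.card (S.prod (⊤ : Subgroup (Nn (P : Subgroup G)))) =
      Nat.card S * Nat.card (Nn (P : Subgroup G)) := by
    rw [Nat.card_congr (Subgroup.prodEquiv S (⊤ : Subgroup (Nn (P : Subgroup G)))).toEquiv,
      Nat.card_prod, Subgroup.card_top]
  rw [mul_comm, ← h3, ← h4]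
  exact h2

theorem ker_triv {G : Type} [Group G] [Finite G] {p : ℕ} [Fact p.Prime] (P : Sylow p G)
    (l : G →* ℂˣ) (hl : ∀ x ∈ Nn (P : Subgroup G), l x = 1) : l = 1 := by
  have hP : (P : Subgroup G) ≤ l.ker := fun x hx => hl x (Subgroup.le_normalizer hx)
  have h := Sylow.normalizer_sup_eq_top' P hP
  have h2 : (⊤ : Subgroup G) ≤ l.ker := by
    rw [← h]
    exact sup_le (fun x hx => hl x hx) le_rfl
  ext x
  have : l x = 1 := h2 (Subgroup.mem_top x)
  rw [this]
  rfl

theorem ker_card {G : Type} [Group G] [Finite G] {p : ℕ} [Fact p.Prime] (P : Sylow p G)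
    (B : Subgroup G) :
    Nat.card (rs B).ker ≤ B.relIndex (Nn (P : Subgroup G)) := by
  classical
  set N := Nn (P : Subgroup G) with hN
  let v : (rs B).ker → (N →* ℂ) := fun l => (Units.coeHom ℂ).comp ((l.1 : G →* ℂˣ).comp N.subtype)
  have hv : Function.Injective v := by
    intro a b hab
    apply Subtype.ext
    have : (a.1 * b.1⁻¹ : G →* ℂˣ) = 1 := by
      apply ker_triv P
      intro x hx
      have h1 : (((a.1 : G →* ℂˣ) x : ℂˣ) : ℂ) = (((b.1 : G →* ℂˣ) x : ℂˣ) : ℂ) :=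
        DFunLike.congr_fun (f := v a) (g := v b) hab (⟨x, hx⟩ : N)
      have h2 := Units.ext h1
      rw [MonoidHom.mul_apply, MonoidHom.inv_apply, h2, mul_inv_cancel]
    exact mul_inv_eq_one.mp this
  have hli : LinearIndependent ℂ (fun l => (v l : N → ℂ)) :=
    (linearIndependent_monoidHom N ℂ).comp v hv
  let w : (rs B).ker → (N ⧸ B.subgroupOf N → ℂ) := fun l =>
    Quotient.lift (fun x : N => ((l.1 : G →* ℂˣ) x : ℂ)) (by
      intro x y hxy
      have h1 : x⁻¹ * y ∈ B.subgroupOf N := QuotientGroup.leftRel_apply.mp hxy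
      have h2 : (l.1 : G →* ℂˣ) ((x : G)⁻¹ * y) = 1 :=
        DFunLike.congr_fun (show rs B l.1 = 1 from l.2) ⟨_, h1⟩
      rw [map_mul, map_inv, inv_mul_eq_one] at h2
      change (((l.1 : G →* ℂˣ) (x : G) : ℂˣ) : ℂ) = (((l.1 : G →* ℂˣ) (y : G) : ℂˣ) : ℂ)
      rw [h2])
  have hw : LinearIndependent ℂ w := by
    apply LinearIndependent.of_comp
      (LinearMap.funLeft ℂ ℂ (fun x : N => (QuotientGroup.mk x : N ⧸ B.subgroupOf N)))
    exact hli
  have := Fintype.ofFinite (rs B).ker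
  have := Fintype.ofFinite (N ⧸ B.subgroupOf N)
  have h5 := hw.fintype_card_le_finrank
  rw [Module.finrank_fintype_fun_eq_card, ← Nat.card_eq_fintype_card,
    ← Nat.card_eq_fintype_card] at h5
  exact h5

open Classical in
theorem mult_bound {G : Type} [Group G] [Fintype G] {p : ℕ} [Fact p.Prime] (P : Sylow p G)
    (μ : (P : Subgroup G) →* ℂˣ) (B : Subgroup G) (hB : BStab (P : Subgroup G) μ B)
    (f : G → ℂ) (hf : IsCh f) (ν : B →* ℂˣ)
    (hν : ∀ (x : G) (hx : x ∈ (P : Subgroup G)) (hB : x ∈ B), ν ⟨x, hB⟩ = μ ⟨x, hx⟩)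
    (hm : 1 ≤ mm ν (fun b : B => f b)) :
    Nat.card ((MulAction.stabilizer (G →* ℂˣ) f ⊓ (rs (P : Subgroup G)).ker :
      Subgroup (G →* ℂˣ))) ≤
      mm μ (fun x : (P : Subgroup G) => f x) * B.relIndex (Nn (P : Subgroup G)) := by
  set T0 := (MulAction.stabilizer (G →* ℂˣ) f ⊓ (rs (P : Subgroup G)).ker :
      Subgroup (G →* ℂˣ)) with hT0
  let φ : T0 →* (B →* ℂˣ) := (rs B).comp T0.subtype
  have h1 : Nat.card φ.ker * Nat.card φ.range = Nat.card T0 := by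
    rw [← Subgroup.index_ker, Subgroup.card_mul_index]
  have h2 : Nat.card φ.ker ≤ Nat.card (rs B).ker :=
    Nat.card_le_card_of_injective (fun a => ⟨a.1.1, a.2⟩) (by
      intro a b hab
      apply Subtype.ext
      apply Subtype.ext
      injection hab)
  have h3 : Nat.card φ.range ≤ mm μ (fun x : (P : Subgroup G) => f x) := by
    have hfin : Finite φ.range := inferInstance
    let e : φ.range ↪ (B →* ℂˣ) := ⟨fun η => η.1 * ν, by
      intro a b hab
      apply Subtype.ext
      exact mul_right_cancel (a := (a.1 : B →* ℂˣ)) (b := ν) (c := b.1) hab⟩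
    have := Fintype.ofFinite φ.range
    have hsum := mm_sum_le (Subgroup.inclusion hB.ge) (hf.comp B.subtype) μ
      (Finset.univ.map e) (by
        intro η hη
        obtain ⟨a, -, rfl⟩ := Finset.mem_map.mp hη
        obtain ⟨_, ⟨l, rfl⟩⟩ := a
        ext x
        have hl : rs (P : Subgroup G) l.1 = 1 := l.2.2
        have hl2 : l.1 (x : G) = 1 := DFunLike.congr_fun hl x
        change (((l.1 (x : G)) * ν ⟨x, hB.ge x.2⟩ : ℂˣ) : ℂ) = _
        rw [hl2, one_mul, hν x x.2 (hB.ge x.2)])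
    refine le_trans ?_ hsum
    rw [Finset.sum_map]
    have : ∀ a ∈ (Finset.univ : Finset φ.range), 1 ≤ mm (e a) (fun b : B => f b) := by
      rintro ⟨_, ⟨l, rfl⟩⟩ -
      have hl : l.1 • f = f := l.2.1
      have := mm_twist ν (rs B l.1) (fun b : B => f b)
      rw [← this] at hm
      have e2 : (fun b : B => ((rs B l.1 b : ℂˣ) : ℂ) * f b) = fun b : B => f b := by
        funext b
        exact congrFun hl b
      rw [e2] at hm
      exact hm
    have h4 := Finset.card_nsmul_le_sum _ _ _ this
    rw [Finset.card_univ, smul_eq_mul, mul_one, ← Nat.card_eq_fintype_card] at h4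
    exact h4
  calc Nat.card T0 = Nat.card φ.range * Nat.card φ.ker := by rw [← h1, mul_comm]
    _ ≤ _ := Nat.mul_le_mul h3 (h2.trans (ker_card P B))

open Classical in
theorem mm_const {G : Type} [Group G] [Fintype G] {p : ℕ} [Fact p.Prime] (P : Sylow p G)
    (μ : (P : Subgroup G) →* ℂˣ) (f : G → ℂ) (hf : IsCh f) (S : Subgroup (G →* ℂˣ))
    (hS : S ≤ MulAction.stabilizer (G →* ℂˣ) f) (ξ : (P : Subgroup G) →* ℂˣ)
    (hξ : ξ ∈ MulAction.orbit (S.prod (⊤ : Subgroup (Nn (P : Subgroup G)))) μ) :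
    mm ξ (fun x : (P : Subgroup G) => f x) = mm μ (fun x : (P : Subgroup G) => f x) := by
  obtain ⟨⟨⟨l, h⟩, hl, -⟩, rfl⟩ := hξ
  have hl : l • f = f := hS hl
  change mm (((l, h) : (G →* ℂˣ) × Nn (P : Subgroup G)) • μ) (fun x : (P : Subgroup G) => f x) = _
  have e2 : (fun b : (P : Subgroup G) => ((rs (P : Subgroup G) l b : ℂˣ) : ℂ) * f b)
      = fun b : (P : Subgroup G) => f b := by
    funext b
    exact congrFun hl b
  have e1 := mm_twist (((1, h) : (G →* ℂˣ) × Nn (P : Subgroup G)) • μ) (rs (P : Subgroup G) l)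
    (fun b : (P : Subgroup G) => f b)
  rw [e2] at e1
  rw [ln_split, e1]
  have e3 := mm_conj ((P : Subgroup G).normalizerMonoidHom h⁻¹) μ
    (fun b : (P : Subgroup G) => f b) (by
      intro x
      rw [conj_apply, hf.conj])
  rw [← e3]
  congr 1
  ext x
  rw [ln_apply]
  simp

open Classical in
theorem D0 {G : Type} [Group G] [Fintype G] {p : ℕ} [Fact p.Prime] (P : Sylow p G)
    (μ : (P : Subgroup G) →* ℂˣ) (f : G → ℂ) (hf : IsCh f) (hg : Good (P : Subgroup G) μ f)
    (X : Finset ((P : Subgroup G) →* ℂˣ))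
    (hX : (X : Set ((P : Subgroup G) →* ℂˣ)) = MulAction.orbit ((MulAction.stabilizer (G →* ℂˣ) f).prod
      (⊤ : Subgroup (Nn (P : Subgroup G)))) μ) :
    Nat.card (MulAction.stabilizer (G →* ℂˣ) f) ≤
      ∑ ξ ∈ X, mm ξ (fun x : (P : Subgroup G) => f x) := by
  obtain ⟨B, hB, ν, hν, hm⟩ := hg
  have h1 := mult_bound P μ B hB f hf ν hν hm
  have h2 := orb_card P μ B hB (MulAction.stabilizer (G →* ℂˣ) f)
  rw [← hX, Set.ncard_coe_finset] at h2
  rw [Finset.sum_congr rfl (fun ξ hξ => mm_const P μ f hf _ le_rfl ξ (by rw [← hX]; exact hξ)),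
    Finset.sum_const, smul_eq_mul]
  have h3 : B.relIndex (Nn (P : Subgroup G)) * Nat.card B = Nat.card (Nn (P : Subgroup G)) := by
    rw [← Subgroup.card_mul_index (B.subgroupOf (Nn (P : Subgroup G))),
      Nat.card_congr (Subgroup.subgroupOfEquivOfLe hB.le).toEquiv, mul_comm]
    rfl
  have hBpos : 0 < Nat.card B := Nat.card_pos
  have hkpos : 0 < B.relIndex (Nn (P : Subgroup G)) := by
    by_contra h
    have h' : B.relIndex (Nn (P : Subgroup G)) = 0 := by omega
    rw [h', zero_mul] at h3
    have : 0 < Nat.card (Nn (P : Subgroup G)) := Nat.card_pos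
    omega
  rw [← h3, ← mul_assoc, ← mul_assoc] at h2
  have h4 := Nat.eq_of_mul_eq_mul_right hBpos h2
  refine Nat.le_of_mul_le_mul_right ?_ hkpos
  rw [← h4, mul_assoc]
  exact Nat.mul_le_mul_left _ h1

theorem stab_orbit_sub {G : Type} [Group G] (Q : Subgroup G) (S : Subgroup (G →* ℂˣ))
    (μ : Q →* ℂˣ) :
    MulAction.orbit (S.prod (⊤ : Subgroup (Nn Q))) μ ⊆ MulAction.orbit ((G →* ℂˣ) × Nn Q) μ := by
  rintro _ ⟨a, rfl⟩
  exact ⟨a.1, rfl⟩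

theorem ln_orbit_symm {G : Type} [Group G] (Q : Subgroup G) {a b : Q →* ℂˣ}
    (h : a ∈ MulAction.orbit ((G →* ℂˣ) × Nn Q) b) :
    b ∈ MulAction.orbit ((G →* ℂˣ) × Nn Q) a :=
  (MulAction.mem_orbit_symm (G := (G →* ℂˣ) × Nn Q)).mp h

theorem ln_orbit_trans {G : Type} [Group G] (Q : Subgroup G) {a b c : Q →* ℂˣ}
    (h : a ∈ MulAction.orbit ((G →* ℂˣ) × Nn Q) b)
    (h' : b ∈ MulAction.orbit ((G →* ℂˣ) × Nn Q) c) :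
    a ∈ MulAction.orbit ((G →* ℂˣ) × Nn Q) c := by
  obtain ⟨x, rfl⟩ := h
  obtain ⟨y, rfl⟩ := h'
  refine ⟨x * y, ?_⟩
  change (x * y) • c = x • y • c
  exact (lnAct Q).mul_smul x y c

theorem D1 {G : Type} [Group G] [Fintype G] {p : ℕ} [Fact p.Prime] (P : Sylow p G)
    (μ : (P : Subgroup G) →* ℂˣ) (f : G → ℂ) (hf : IsCh f) (hg : Good (P : Subgroup G) μ f) :
    Nat.card (MulAction.stabilizer (G →* ℂˣ) f) ≤ charDeg f := by
  classical
  have hfin : (MulAction.orbit ((MulAction.stabilizer (G →* ℂˣ) f).prod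
      (⊤ : Subgroup (Nn (P : Subgroup G)))) μ).Finite := Set.finite_range _
  exact (D0 P μ f hf hg hfin.toFinset hfin.coe_toFinset).trans
    (mm_sum_le_deg (hf.comp (P : Subgroup G).subtype) _)

theorem D2 {G : Type} [Group G] [Fintype G] {p : ℕ} [Fact p.Prime] (P : Sylow p G)
    (μ μ' : (P : Subgroup G) →* ℂˣ) (f : G → ℂ) (hf : IsCh f) (hg : Good (P : Subgroup G) μ f)
    (hg' : Good (P : Subgroup G) μ' f)
    (hno : μ' ∉ MulAction.orbit ((G →* ℂˣ) × Nn (P : Subgroup G)) μ) :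
    2 * Nat.card (MulAction.stabilizer (G →* ℂˣ) f) ≤ charDeg f := by
  classical
  have hfin : (MulAction.orbit ((MulAction.stabilizer (G →* ℂˣ) f).prod
      (⊤ : Subgroup (Nn (P : Subgroup G)))) μ).Finite := Set.finite_range _
  have hfin' : (MulAction.orbit ((MulAction.stabilizer (G →* ℂˣ) f).prod
      (⊤ : Subgroup (Nn (P : Subgroup G)))) μ').Finite := Set.finite_range _
  have h1 := D0 P μ f hf hg hfin.toFinset hfin.coe_toFinset
  have h2 := D0 P μ' f hf hg' hfin'.toFinset hfin'.coe_toFinset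
  have hd : Disjoint hfin.toFinset hfin'.toFinset := by
    rw [Finset.disjoint_left]
    intro ξ hξ hξ'
    rw [Set.Finite.mem_toFinset] at hξ hξ'
    have a1 := stab_orbit_sub _ _ _ hξ
    have a2 := stab_orbit_sub _ _ _ hξ'
    exact hno (ln_orbit_trans _ (ln_orbit_symm _ a2) a1)
  have h3 := mm_sum_le_deg (hf.comp (P : Subgroup G).subtype) (hfin.toFinset ∪ hfin'.toFinset)
  rw [Finset.sum_union hd] at h3
  refine le_trans ?_ h3
  rw [two_mul]
  exact add_le_add h1 h2

open Classical in
theorem good_mm {G : Type} [Group G] [Fintype G] {p : ℕ} [Fact p.Prime] (P : Sylow p G)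
    (μ : (P : Subgroup G) →* ℂˣ) (f : G → ℂ) (hf : IsCh f) (hg : Good (P : Subgroup G) μ f) :
    1 ≤ mm μ (fun x : (P : Subgroup G) => f x) := by
  obtain ⟨B, hB, ν, hν, hm⟩ := hg
  have h1 := mult_bound P μ B hB f hf ν hν hm
  have : 0 < Nat.card ((MulAction.stabilizer (G →* ℂˣ) f ⊓ (rs (P : Subgroup G)).ker :
    Subgroup (G →* ℂˣ))) := Nat.card_pos
  exact Nat.pos_of_mul_pos_right (this.trans_le h1)

theorem kbound {G : Type} [Group G] [Fintype G] {p : ℕ} [Fact p.Prime] (P : Sylow p G)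
    (μ : (P : Subgroup G) →* ℂˣ) (f : G → ℂ) (hf : IsCh f) (hg : Good (P : Subgroup G) μ f) :
    ∃ k, k ∣ Nat.card G ∧ k ≤ charDeg f ∧
      (MulAction.orbit ((G →* ℂˣ) × Nn (P : Subgroup G)) μ).ncard =
        Nat.card (rs (P : Subgroup G)).range * k ∧
      (MulAction.orbit ((G →* ℂˣ) × Nn (P : Subgroup G)) μ⁻¹).ncard =
        Nat.card (rs (P : Subgroup G)).range * k := by
  classical
  obtain ⟨B, hB, ν, hν, hm⟩ := hg
  have h3 : B.relIndex (Nn (P : Subgroup G)) * Nat.card B = Nat.card (Nn (P : Subgroup G)) := by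
    rw [← Subgroup.card_mul_index (B.subgroupOf (Nn (P : Subgroup G))),
      Nat.card_congr (Subgroup.subgroupOfEquivOfLe hB.le).toEquiv, mul_comm]
    rfl
  have hBpos : 0 < Nat.card B := Nat.card_pos
  have horb : ∀ ξ : (P : Subgroup G) →* ℂˣ, BStab (P : Subgroup G) ξ B →
      (MulAction.orbit ((G →* ℂˣ) × Nn (P : Subgroup G)) ξ).ncard =
        Nat.card (rs (P : Subgroup G)).range * B.relIndex (Nn (P : Subgroup G)) := by
    intro ξ hξ
    have h4 := orb_card P ξ B hξ ⊤
    have e1 : MulAction.orbit ((⊤ : Subgroup (G →* ℂˣ)).prod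
        (⊤ : Subgroup (Nn (P : Subgroup G)))) ξ =
        MulAction.orbit ((G →* ℂˣ) × Nn (P : Subgroup G)) ξ := by
      apply Set.Subset.antisymm (stab_orbit_sub _ _ _)
      rintro _ ⟨a, rfl⟩
      exact ⟨⟨a, trivial, trivial⟩, rfl⟩
    rw [e1, top_inf_eq, Subgroup.card_top] at h4
    have h5 := Subgroup.card_mul_index (rs (P : Subgroup G)).ker
    rw [Subgroup.index_ker] at h5
    rw [← h5, ← h3] at h4
    have hKpos : 0 < Nat.card (rs (P : Subgroup G)).ker := Nat.card_pos
    apply Nat.eq_of_mul_eq_mul_right (Nat.mul_pos hKpos hBpos)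
    rw [h4]
    ring
  refine ⟨B.relIndex (Nn (P : Subgroup G)), ?_, ?_, horb μ hB, horb _ hB.inv⟩
  · exact (Dvd.intro _ h3).trans (Subgroup.card_subgroup_dvd_card _)
  · have h4 := orb_card P μ B hB ⊥
    have hfin : (MulAction.orbit ((⊥ : Subgroup (G →* ℂˣ)).prod
      (⊤ : Subgroup (Nn (P : Subgroup G)))) μ).Finite := Set.finite_range _
    rw [bot_inf_eq, Subgroup.card_bot, one_mul, one_mul, ← h3] at h4
    have h5 := Nat.eq_of_mul_eq_mul_right hBpos h4
    rw [← h5]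
    have h6 := mm_sum_le_deg (hf.comp (P : Subgroup G).subtype) hfin.toFinset
    refine le_trans ?_ h6
    have hmμ := good_mm P μ f hf ⟨B, hB, ν, hν, hm⟩
    have h7 := Finset.card_nsmul_le_sum hfin.toFinset
      (fun ξ => mm ξ (fun x : (P : Subgroup G) => f x)) 1 (by
        intro ξ hξ
        rw [Set.Finite.mem_toFinset] at hξ
        rw [mm_const P μ f hf ⊥ bot_le ξ hξ]
        exact hmμ)
    rw [smul_eq_mul, mul_one, ← Set.ncard_eq_toFinset_card _ hfin] at h7
    exact h7

theorem deg_ne_one {G : Type} [Group G] [Fintype G] {p : ℕ} [Fact p.Prime] (P : Sylow p G)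
    (μ : (P : Subgroup G) →* ℂˣ) (f : G → ℂ) (hf : IsCh f) (hg : Good (P : Subgroup G) μ f)
    (hμ : μ ∉ (rs (P : Subgroup G)).range) : charDeg f ≠ 1 := by
  classical
  intro hd
  have h1 := good_mm P μ f hf hg
  obtain ⟨l, hl⟩ := linear_of_deg_one hf hd
  have hne : μ ≠ rs (P : Subgroup G) l := fun h => hμ ⟨l, h.symm⟩
  have h2 := mm_sum_le_deg (hf.comp (P : Subgroup G).subtype) {μ, rs (P : Subgroup G) l}
  rw [Finset.sum_pair hne] at h2
  have h3 : mm (rs (P : Subgroup G) l) (fun x : (P : Subgroup G) => f x) = 1 := by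
    have e1 := mm_twist 1 (rs (P : Subgroup G) l) (fun _ : (P : Subgroup G) => (1 : ℂ))
    have e2 : mm (1 : (P : Subgroup G) →* ℂˣ) (fun _ : (P : Subgroup G) => (1 : ℂ)) = 1 := by
      simp [mm, mult]
    have e3 : (fun x : (P : Subgroup G) => ((rs (P : Subgroup G) l x : ℂˣ) : ℂ) * (1 : ℂ)) =
        fun x : (P : Subgroup G) => f x := by
      funext x
      rw [mul_one, hl]
      rfl
    rw [e2, e3] at e1
    rw [← e1]
    congr 1
    exact (mul_one (M := (P : Subgroup G) →* ℂˣ) _).symm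
  have h4 : charDeg (fun x : (P : Subgroup G) => f ((P : Subgroup G).subtype x)) = 1 := hd
  rw [h4] at h2
  have h2' : mm μ (fun x : (P : Subgroup G) => f x) +
    mm (rs (P : Subgroup G) l) (fun x : (P : Subgroup G) => f x) ≤ 1 := h2
  omega

theorem inv_deg {G : Type} [Group G] (f : G → ℂ) : charDeg (fun x => f x⁻¹) = charDeg f := by
  simp [charDeg]

theorem inv_stab_le {G : Type} [Group G] (f : G → ℂ) :
    MulAction.stabilizer (G →* ℂˣ) f ≤ MulAction.stabilizer (G →* ℂˣ) (fun x => f x⁻¹) := by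
  intro l hl
  have hl' : l • f = f := hl
  have h2 : l⁻¹ ∈ MulAction.stabilizer (G →* ℂˣ) (fun x => f x⁻¹) := by
    change l⁻¹ • (fun x => f x⁻¹) = _
    rw [tw_def] at hl' ⊢
    funext x
    have := congrFun hl' x⁻¹
    rw [map_inv] at this
    exact this
  exact (inv_inv l) ▸ (MulAction.stabilizer (G →* ℂˣ) (fun x => f x⁻¹)).inv_mem h2

theorem inv_stab {G : Type} [Group G] (f : G → ℂ) :
    MulAction.stabilizer (G →* ℂˣ) (fun x => f x⁻¹) = MulAction.stabilizer (G →* ℂˣ) f := by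
  apply le_antisymm _ (inv_stab_le f)
  have := inv_stab_le (fun x => f x⁻¹)
  simp only [inv_inv] at this
  exact this

theorem same_orbit {G : Type} [Group G] [Fintype G] {p : ℕ} [Fact p.Prime] (P : Sylow p G)
    (μ μ' : (P : Subgroup G) →* ℂˣ) (f f' : G → ℂ) (hf : IsCh f)
    (hg : Good (P : Subgroup G) μ f) (hg' : Good (P : Subgroup G) μ' f')
    (ho : f' ∈ MulAction.orbit (G →* ℂˣ) f)
    (hno : μ' ∉ MulAction.orbit ((G →* ℂˣ) × Nn (P : Subgroup G)) μ) :
    2 * Nat.card (MulAction.stabilizer (G →* ℂˣ) f) ≤ charDeg f := by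
  obtain ⟨l, hl⟩ := ho
  have hl : l • f = f' := hl
  have h1 := hg'.twist l⁻¹
  have h2 : l⁻¹ • f' = f := by
    rw [← hl]
    exact inv_smul_smul l f
  rw [h2] at h1
  refine D2 P μ _ f hf hg h1 (fun hmem => hno ?_)
  refine ln_orbit_trans _ (ln_orbit_symm _ ?_) hmem
  exact ⟨(l⁻¹, 1), ln_one _ _ _⟩

theorem orbit_range {G : Type} [Group G] (Q : Subgroup G) {μ ξ : Q →* ℂˣ}
    (h : ξ ∈ MulAction.orbit ((G →* ℂˣ) × Nn Q) μ) (hμ : μ ∈ (rs Q).range) :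
    ξ ∈ (rs Q).range := by
  obtain ⟨⟨l, n⟩, rfl⟩ := h
  obtain ⟨m, rfl⟩ := hμ
  change ((l, n) : (G →* ℂˣ) × Nn Q) • rs Q m ∈ _
  rw [ln_split, ln_rs]
  exact ⟨l * m, rfl⟩

theorem tw_orbit_symm {G : Type} [Group G] {a b : G → ℂ}
    (h : a ∈ MulAction.orbit (G →* ℂˣ) b) : b ∈ MulAction.orbit (G →* ℂˣ) a :=
  (MulAction.mem_orbit_symm (G := G →* ℂˣ)).mp h

theorem step_one {G : Type} [Group G] [Fintype G] (hodd : Odd (Nat.card G)) {p : ℕ}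
    [Fact p.Prime] (h : acd {f | f ∈ Irr G ∧ ¬ p ∣ charDeg f} < 2) (P : Sylow p G)
    (μ : (P : Subgroup G) →* ℂˣ) (hμ : μ ∉ (rs (P : Subgroup G)).range) (f : G → ℂ)
    (hf : f ∈ Irr G) (hpf : ¬ p ∣ charDeg f) (hg : Good (P : Subgroup G) μ f) :
    charDeg f = 3 ∧ Nat.card (MulAction.stabilizer (G →* ℂˣ) f) = 3 ∧
      (fun x => f x⁻¹) ∉ MulAction.orbit (G →* ℂˣ) f := by
  classical
  have hch : IsCh f := ((irr_iff f).mp hf).1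
  have h0 : charDeg f ≠ 0 := fun h0 => hpf (h0 ▸ dvd_zero p)
  have h1 := deg_ne_one P μ f hch hg hμ
  have h2 := no_deg_two hodd hf
  have ht := D1 P μ f hch hg
  have c1 := count_orbits Fact.out h {f} (charDeg f)
    (Nat.card (MulAction.stabilizer (G →* ℂˣ) f)) (Finset.singleton_nonempty _)
    (by
      intro f' hf'
      rw [Finset.mem_singleton] at hf'
      subst hf'
      exact ⟨hf, hpf, by omega⟩)
    (by
      intro f' hf'
      rw [Finset.mem_singleton] at hf'
      rw [hf'])
    (by
      intro f' hf'
      rw [Finset.mem_singleton] at hf'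
      rw [hf'])
    (by
      intro a ha b hb hab
      rw [Finset.mem_singleton] at ha hb
      exact absurd (ha.trans hb.symm) hab)
  rw [Finset.card_singleton, one_mul] at c1
  have hno : (fun x => f x⁻¹) ∉ MulAction.orbit (G →* ℂˣ) f := by
    intro ho
    have := same_orbit P μ μ⁻¹ f _ hch hg hg.inv ho (inv_not_orbit hodd _ μ hμ)
    omega
  have hne : f ≠ (fun x => f x⁻¹) := by
    intro he
    apply hno
    rw [← he]
    exact MulAction.mem_orbit_self f
  have c2 := count_orbits Fact.out h {f, fun x => f x⁻¹} (charDeg f)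
    (Nat.card (MulAction.stabilizer (G →* ℂˣ) f)) (Finset.insert_nonempty _ _)
    (by
      intro f' hf'
      rw [Finset.mem_insert, Finset.mem_singleton] at hf'
      rcases hf' with rfl | rfl
      · exact ⟨hf, hpf, by omega⟩
      · rw [inv_deg]
        exact ⟨irr_inv hf, hpf, by omega⟩)
    (by
      intro f' hf'
      rw [Finset.mem_insert, Finset.mem_singleton] at hf'
      rcases hf' with rfl | rfl
      · rfl
      · exact inv_deg f)
    (by
      intro f' hf'
      rw [Finset.mem_insert, Finset.mem_singleton] at hf'
      rcases hf' with rfl | rfl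
      · rfl
      · rw [inv_stab])
    (by
      intro a ha b hb hab
      rw [Finset.mem_insert, Finset.mem_singleton] at ha hb
      rcases ha with rfl | rfl <;> rcases hb with rfl | rfl
      · exact absurd rfl hab
      · exact hno
      · exact fun ho => hno (tw_orbit_symm ho)
      · exact absurd rfl hab)
  rw [Finset.card_pair hne] at c2
  refine ⟨by omega, by omega, hno⟩

theorem step_two {G : Type} [Group G] [Fintype G] (hodd : Odd (Nat.card G)) {p : ℕ}
    [Fact p.Prime] (h : acd {f | f ∈ Irr G ∧ ¬ p ∣ charDeg f} < 2) (P : Sylow p G)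
    (μ : (P : Subgroup G) →* ℂˣ) (hμ : μ ∉ (rs (P : Subgroup G)).range) (f : G → ℂ)
    (hf : f ∈ Irr G) (hpf : ¬ p ∣ charDeg f) (hg : Good (P : Subgroup G) μ f)
    (μ' : (P : Subgroup G) →* ℂˣ) (hμ' : μ' ∉ (rs (P : Subgroup G)).range) :
    μ' ∈ MulAction.orbit ((G →* ℂˣ) × Nn (P : Subgroup G)) μ ∨
      μ' ∈ MulAction.orbit ((G →* ℂˣ) × Nn (P : Subgroup G)) μ⁻¹ := by
  classical
  by_contra hcon
  rw [not_or] at hcon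
  obtain ⟨hn1, hn2⟩ := hcon
  obtain ⟨f', hf', hpf', hg'⟩ := good_exists P μ'
  obtain ⟨d1, t1, o1⟩ := step_one hodd h P μ hμ f hf hpf hg
  obtain ⟨d2, t2, o2⟩ := step_one hodd h P μ' hμ' f' hf' hpf' hg'
  have hch : IsCh f := ((irr_iff f).mp hf).1
  have hch2 : IsCh (fun x => f x⁻¹) := ((irr_iff _).mp (irr_inv hf)).1
  have d3 : charDeg (fun x => f x⁻¹) = 3 := by rw [inv_deg, d1]
  have t3 : Nat.card (MulAction.stabilizer (G →* ℂˣ) (fun x => f x⁻¹)) = 3 := by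
    rw [inv_stab, t1]
  have p1 : f' ∉ MulAction.orbit (G →* ℂˣ) f := by
    intro ho
    have := same_orbit P μ μ' f f' hch hg hg' ho hn1
    omega
  have p2 : f' ∉ MulAction.orbit (G →* ℂˣ) (fun x => f x⁻¹) := by
    intro ho
    have := same_orbit P μ⁻¹ μ' _ f' hch2 hg.inv hg' ho hn2
    omega
  have n1 : f ≠ (fun x => f x⁻¹) := by
    intro he
    apply o1
    rw [← he]
    exact MulAction.mem_orbit_self f
  have n2 : f ≠ f' := fun he => p1 (he ▸ MulAction.mem_orbit_self f)
  have n3 : (fun x => f x⁻¹) ≠ f' := fun he => p2 (he ▸ MulAction.mem_orbit_self _)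
  have c := count_orbits Fact.out h {f, fun x => f x⁻¹, f'} 3 3 (Finset.insert_nonempty _ _)
    (by
      intro g hg
      simp only [Finset.mem_insert, Finset.mem_singleton] at hg
      rcases hg with rfl | rfl | rfl
      · exact ⟨hf, hpf, by omega⟩
      · rw [inv_deg]
        exact ⟨irr_inv hf, hpf, by omega⟩
      · exact ⟨hf', hpf', by omega⟩)
    (by
      intro g hg
      simp only [Finset.mem_insert, Finset.mem_singleton] at hg
      rcases hg with rfl | rfl | rfl
      · exact d1
      · exact d3
      · exact d2)
    (by
      intro g hg
      simp only [Finset.mem_insert, Finset.mem_singleton] at hg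
      rcases hg with rfl | rfl | rfl
      · exact t1
      · exact t3
      · exact t2)
    (by
      intro a ha b hb hab
      simp only [Finset.mem_insert, Finset.mem_singleton] at ha hb
      rcases ha with rfl | rfl | rfl <;> rcases hb with rfl | rfl | rfl
      · exact absurd rfl hab
      · exact o1
      · exact p1
      · exact fun ho => o1 (tw_orbit_symm ho)
      · exact absurd rfl hab
      · exact p2
      · exact fun ho => p1 (tw_orbit_symm ho)
      · exact fun ho => p2 (tw_orbit_symm ho)
      · exact absurd rfl hab)
  rw [Finset.card_eq_three.mpr ⟨_, _, _, n1, n2, n3, rfl⟩] at c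
  omega

theorem hom_pgroup {Q : Type} [Group Q] [Finite Q] {p : ℕ} [Fact p.Prime] (hQ : IsPGroup p Q) :
    ∃ n, Nat.card (Q →* ℂˣ) = p ^ n := by
  obtain ⟨n, hn⟩ := IsPGroup.iff_card.mp hQ
  have : IsPGroup p (Q →* ℂˣ) := by
    intro μ
    refine ⟨n, ?_⟩
    ext x
    rw [MonoidHom.pow_apply, ← map_pow, ← hn, pow_card_eq_one', map_one]
    rfl
  exact IsPGroup.iff_card.mp this

theorem odd_order_avg_pprime_lt_two_implies_pNilpotent
    (G : Type) [Group G] [Fintype G] (hodd : Odd (Nat.card G))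
    (p : ℕ) (hp : p.Prime) (hpodd : Odd p) (hp7 : p ≠ 7)
    (h : acd {f ∈ Irr G | ¬ p ∣ charDeg f} < 2) :
    HasNormalPComplement p G := by
  classical
  have hfact : Fact p.Prime := ⟨hp⟩
  obtain ⟨P⟩ : Nonempty (Sylow p G) := inferInstance
  apply aux_tate P
  by_contra hcon
  push Not at hcon
  obtain ⟨μ, hμ0⟩ := hcon
  have hμ : μ ∉ (rs (P : Subgroup G)).range := by
    rintro ⟨l, hl⟩
    obtain ⟨x, hx⟩ := hμ0 l
    exact hx (DFunLike.congr_fun hl x)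
  obtain ⟨f, hf, hpf, hg⟩ := good_exists P μ
  obtain ⟨d1, t1, o1⟩ := step_one hodd h P μ hμ f hf hpf hg
  have hall := step_two hodd h P μ hμ f hf hpf hg
  obtain ⟨k, hkG, hkd, ho1, ho2⟩ := kbound P μ f ((irr_iff f).mp hf).1 hg
  obtain ⟨n, hn⟩ := hom_pgroup P.2
  have hk : Odd k := hodd.of_dvd_nat hkG
  have hcard : Nat.card ((P : Subgroup G) →* ℂˣ) =
      Nat.card (rs (P : Subgroup G)).range * (1 + 2 * k) := by
    have hu : (Set.univ : Set ((P : Subgroup G) →* ℂˣ)) =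
        ((rs (P : Subgroup G)).range : Set ((P : Subgroup G) →* ℂˣ)) ∪
        (MulAction.orbit ((G →* ℂˣ) × Nn (P : Subgroup G)) μ ∪
          MulAction.orbit ((G →* ℂˣ) × Nn (P : Subgroup G)) μ⁻¹) := by
      symm
      rw [Set.eq_univ_iff_forall]
      intro ξ
      by_cases hξ : ξ ∈ (rs (P : Subgroup G)).range
      · exact Or.inl hξ
      · exact Or.inr (hall ξ hξ)
    have hμi : μ⁻¹ ∉ (rs (P : Subgroup G)).range := by
      intro hi
      have := (rs (P : Subgroup G)).range.inv_mem hi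
      exact hμ ((inv_inv μ) ▸ this)
    have hd1 : Disjoint (MulAction.orbit ((G →* ℂˣ) × Nn (P : Subgroup G)) μ)
        (MulAction.orbit ((G →* ℂˣ) × Nn (P : Subgroup G)) μ⁻¹) := by
      rw [Set.disjoint_left]
      intro ξ h1 h2
      exact inv_not_orbit hodd _ μ hμ (ln_orbit_trans _ (ln_orbit_symm _ h2) h1)
    have hd2 : Disjoint ((rs (P : Subgroup G)).range : Set ((P : Subgroup G) →* ℂˣ))
        (MulAction.orbit ((G →* ℂˣ) × Nn (P : Subgroup G)) μ ∪
          MulAction.orbit ((G →* ℂˣ) × Nn (P : Subgroup G)) μ⁻¹) := by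
      rw [Set.disjoint_left]
      rintro ξ h1 (h2 | h2)
      · exact hμ (orbit_range _ (ln_orbit_symm _ h2) h1)
      · exact hμi (orbit_range _ (ln_orbit_symm _ h2) h1)
    rw [← Set.ncard_univ, hu, Set.ncard_union_eq hd2 (Set.toFinite _) (Set.toFinite _),
      Set.ncard_union_eq hd1 (Set.toFinite _) (Set.toFinite _), ho1, ho2]
    change Nat.card (rs (P : Subgroup G)).range + _ = _
    ring
  rw [hn] at hcard
  have hdvd : (1 + 2 * k) ∣ p ^ n := Dvd.intro_left _ hcard.symm
  rw [d1] at hkd hpf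
  have hk' : k = 1 ∨ k = 3 := by
    obtain ⟨j, rfl⟩ := hk
    omega
  rcases hk' with rfl | rfl
  · have h3 : 3 ∣ p := Nat.prime_three.dvd_of_dvd_pow hdvd
    have := (Nat.prime_dvd_prime_iff_eq Nat.prime_three hp).mp h3
    exact hpf (this ▸ dvd_rfl)
  · have h7 : Nat.Prime 7 := by norm_num
    have := (Nat.prime_dvd_prime_iff_eq h7 hp).mp (h7.dvd_of_dvd_pow hdvd)
    exact hp7 this.symm
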